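/- arXiv:1904.00287 — 2 statements merged into one kernel-verified Lean document; each statement's English description precedes it below -/
import Mathlib

section
/- Assume (A1), (A2) and (SMA) for the finite-state model with real-valued observations. Then for every horizon k ≥ 1, every prior probability vector π, and every convex function φ : ℝ → ℝ for which the integrals exist, ∫_{ℝ^k} φ(m_1(y_{1:k}, π)) σ(π, y_{1:k}, 1) dy_{1:k} ≤ ∫_{ℝ^k} φ(m_2(y_{1:k}, π)) σ(π, y_{1:k}, 2) dy_{1:k}; i.e., the conditional mean under sensor 1 is dominated in the convex stochastic order by that under sensor 2 for all k. -/
open Finset MeasureTheory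

/-- `ψ` is single crossing (from below): once nonnegative it stays nonnegative. -/
def SingleCrossing {α : Type*} [Preorder α] (ψ : α → ℝ) : Prop :=
  ∀ ⦃x x' : α⦄, x < x' → (0 ≤ ψ x → 0 ≤ ψ x') ∧ (ψ x' ≤ 0 → ψ x ≤ 0)

/-- Cdf of the observation density: `F(y|x) = ∫_{-∞}^y B x`. -/
noncomputable def obsCdf {X : ℕ} (B : Fin X → ℝ → ℝ) (y : ℝ) (x : Fin X) : ℝ :=
  ∫ t in Set.Iic y, B x t

/-- Normalizer `σ(π, y_{1:k}) = Σ_i π_i Π_t B_i(y_t)`. -/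
def nrm {X k : ℕ} (B : Fin X → ℝ → ℝ) (π : Fin X → ℝ) (ys : Fin k → ℝ) : ℝ :=
  ∑ i, π i * ∏ t, B i (ys t)

/-- Conditional mean `m(y_{1:k}, π)`. -/
noncomputable def cmean {X k : ℕ} (B : Fin X → ℝ → ℝ) (g : Fin X → ℝ)
    (π : Fin X → ℝ) (ys : Fin k → ℝ) : ℝ :=
  (∑ i, g i * (π i * ∏ t, B i (ys t))) / nrm B π ys

/-!
Two laws with equal means and bounded supports are in convex order as soon as every hinge
`x ↦ max (x - c) 0` has a larger integral under the second law, because convex functions are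
uniform limits of affine functions plus nonnegative combinations of hinges. For the law of the
conditional mean, the hinge integral is `∫ max (∑ i, a i * ∏ t, B i (y t)) 0 dy` with
`a i = π i * (g i - c)`, whose sign changes at most once, from negative to positive.

By total positivity, the integrand for the first sensor is positive on a set which is an upper set
up to a null set. Let `s` be the first state with `0 < a s`, and transport this set to the
observations of the second sensor by matching the quantiles of the two sensors at state `s`. Single
crossing makes the matched observation stochastically larger for the second sensor at states
`i ≥ s` and smaller at states `i ≤ s`; this persists for products, so by the sign pattern of `a`
the transported set carries at least as large an integral of `∑ i, a i * ∏ t, B₂ i (y t)`, which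
is itself at most the hinge integral of the second sensor.
-/

open Filter Topology
open scoped ENNReal

/-- `f` is a probability density with respect to `μ`, everywhere nonnegative. -/
structure IsProbDensity {Ω : Type*} [MeasurableSpace Ω] (f : Ω → ℝ) (μ : Measure Ω) : Prop where
  nonneg : ∀ x, 0 ≤ f x
  integral_eq_one : ∫ x, f x ∂μ = 1

/-- The measure whose density with respect to `μ` is the positive part of `f`. -/
noncomputable abbrev densityMeasure {Ω : Type*} [MeasurableSpace Ω] (f : Ω → ℝ)
    (μ : Measure Ω) : Measure Ω :=
  μ.withDensity fun x => ENNReal.ofReal (f x)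

namespace IsProbDensity

section

variable {Ω : Type*} [MeasurableSpace Ω] {μ : Measure Ω} {f : Ω → ℝ}

theorem integrable (hf : IsProbDensity f μ) : Integrable f μ :=
  integrable_of_integral_eq_one hf.integral_eq_one

theorem densityMeasure_apply (hf : IsProbDensity f μ) {A : Set Ω} (hA : MeasurableSet A) :
    densityMeasure f μ A = ENNReal.ofReal (∫ x in A, f x ∂μ) := by
  rw [withDensity_apply _ hA,
    ofReal_integral_eq_lintegral_ofReal hf.integrable.integrableOn (.of_forall hf.nonneg)]

theorem densityMeasure_real_apply (hf : IsProbDensity f μ) {A : Set Ω} (hA : MeasurableSet A) :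
    (densityMeasure f μ).real A = ∫ x in A, f x ∂μ := by
  rw [Measure.real, hf.densityMeasure_apply hA, ENNReal.toReal_ofReal (integral_nonneg hf.nonneg)]

theorem isProbabilityMeasure (hf : IsProbDensity f μ) :
    IsProbabilityMeasure (densityMeasure f μ) := by
  constructor
  rw [hf.densityMeasure_apply .univ, setIntegral_univ, hf.integral_eq_one, ENNReal.ofReal_one]

theorem integral_densityMeasure (hf : IsProbDensity f μ) (φ : Ω → ℝ) :
    ∫ x, φ x ∂densityMeasure f μ = ∫ x, φ x * f x ∂μ := by
  rw [integral_withDensity_eq_integral_toReal_smul₀ hf.integrable.aemeasurable.ennreal_ofReal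
    (.of_forall fun _ => ENNReal.ofReal_lt_top)]
  simp only [ENNReal.toReal_ofReal (hf.nonneg _), smul_eq_mul, mul_comm]

section Sum

variable {ι : Type*} [Fintype ι] {f : ι → Ω → ℝ}

theorem integrable_sum_mul (hf : ∀ i, IsProbDensity (f i) μ) (a : ι → ℝ) :
    Integrable (fun x => ∑ i, a i * f i x) μ :=
  integrable_finsetSum _ fun i _ => (hf i).integrable.const_mul _

theorem integral_sum_mul (hf : ∀ i, IsProbDensity (f i) μ) (a : ι → ℝ) :
    ∫ x, ∑ i, a i * f i x ∂μ = ∑ i, a i := by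
  rw [integral_finsetSum _ fun i _ => (hf i).integrable.const_mul _]
  simp only [integral_const_mul, (hf _).integral_eq_one, mul_one]

theorem sum_mul (hf : ∀ i, IsProbDensity (f i) μ) {w : ι → ℝ} (hw : ∀ i, 0 ≤ w i)
    (hw_sum : ∑ i, w i = 1) : IsProbDensity (fun x => ∑ i, w i * f i x) μ where
  nonneg x := sum_nonneg fun i _ => mul_nonneg (hw i) ((hf i).nonneg x)
  integral_eq_one := (integral_sum_mul hf w).trans hw_sum

theorem sum_mul_densityMeasure_real (hf : ∀ i, IsProbDensity (f i) μ) (a : ι → ℝ)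
    {A : Set Ω} (hA : MeasurableSet A) :
    ∑ i, a i * (densityMeasure (f i) μ).real A = ∫ x in A, ∑ i, a i * f i x ∂μ := by
  rw [integral_finsetSum _ fun i _ => ((hf i).integrable.const_mul _).integrableOn]
  simp only [integral_const_mul, (hf _).densityMeasure_real_apply hA]

theorem sum_mul_densityMeasure_real_le (hf : ∀ i, IsProbDensity (f i) μ)
    (a : ι → ℝ) {A : Set Ω} (hA : MeasurableSet A) :
    ∑ i, a i * (densityMeasure (f i) μ).real A ≤ ∫ x, max (∑ i, a i * f i x) 0 ∂μ := by
  have hpos := (integrable_sum_mul hf a).pos_part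
  rw [sum_mul_densityMeasure_real hf a hA]
  calc ∫ x in A, ∑ i, a i * f i x ∂μ
      ≤ ∫ x in A, max (∑ i, a i * f i x) 0 ∂μ :=
        integral_mono (integrable_sum_mul hf a).integrableOn hpos.integrableOn
          fun x => le_max_left _ _
    _ ≤ ∫ x, max (∑ i, a i * f i x) 0 ∂μ :=
        setIntegral_le_integral hpos (.of_forall fun x => le_max_right _ _)

end Sum

end

section Pi

variable {ι : Type*} [Fintype ι] {Ω : ι → Type*} [∀ i, MeasurableSpace (Ω i)]
  {μ : ∀ i, Measure (Ω i)} [∀ i, SigmaFinite (μ i)] {f : ∀ i, Ω i → ℝ}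

protected theorem pi (hf : ∀ i, IsProbDensity (f i) (μ i)) :
    IsProbDensity (fun y => ∏ i, f i (y i)) (Measure.pi μ) where
  nonneg y := prod_nonneg fun i _ => (hf i).nonneg (y i)
  integral_eq_one := by
    simp only [integral_fintype_prod_eq_prod, (hf _).integral_eq_one, prod_const_one]

theorem densityMeasure_pi (hf : ∀ i, IsProbDensity (f i) (μ i)) :
    densityMeasure (fun y => ∏ i, f i (y i)) (Measure.pi μ) =
      Measure.pi fun i => densityMeasure (f i) (μ i) := by
  have : ∀ i, IsProbabilityMeasure (densityMeasure (f i) (μ i)) := fun i =>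
    (hf i).isProbabilityMeasure
  refine (Measure.pi_eq fun A hA => ?_).symm
  rw [(IsProbDensity.pi hf).densityMeasure_apply (.univ_pi hA), Measure.restrict_pi_pi,
    integral_fintype_prod_eq_prod,
    ENNReal.ofReal_prod_of_nonneg fun i _ => integral_nonneg (hf i).nonneg]
  exact prod_congr rfl fun i _ => ((hf i).densityMeasure_apply (hA i)).symm

end Pi

end IsProbDensity

/-- Total positivity of order two: the minors of `K` on increasing rows and columns are
nonnegative. -/
def IsTP2 {α β : Type*} [Preorder α] [Preorder β] (K : α → β → ℝ) : Prop :=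
  ∀ ⦃x x' : α⦄ ⦃y y' : β⦄, x ≤ x' → y ≤ y' → K x y' * K x' y ≤ K x y * K x' y'

namespace IsTP2

protected theorem prod {α β ι : Type*} [Preorder α] [Preorder β] [Fintype ι] {K : α → β → ℝ}
    (hK : IsTP2 K) (hnn : ∀ x y, 0 ≤ K x y) : IsTP2 fun x (y : ι → β) => ∏ t, K x (y t) := by
  intro x x' y y' hx hy
  simp only [← prod_mul_distrib]
  exact prod_le_prod (fun t _ => mul_nonneg (hnn _ _) (hnn _ _)) fun t _ => hK hx (hy t)

theorem sum_mul_nonneg_of_pos {α β : Type*} [LinearOrder α] [Fintype α] [Preorder β]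
    {K : α → β → ℝ} (hK : IsTP2 K) (hnn : ∀ x y, 0 ≤ K x y) {a : α → ℝ}
    (ha : ∀ ⦃i j⦄, i ≤ j → 0 < a i → 0 ≤ a j) {y y' : β} (hy : y ≤ y')
    (hpos : 0 < ∑ i, a i * K i y) : 0 ≤ ∑ i, a i * K i y' := by
  obtain ⟨p, hp, hmin⟩ := exists_minimal_of_wellFoundedLT (fun i => 0 < a i * K i y)
    ((exists_lt_of_sum_lt (f := 0) (by simpa using hpos)).imp fun _ h => h.2)
  have ha_p : 0 < a p := pos_of_mul_pos_left hp (hnn p y)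
  have hK_p : 0 < K p y := pos_of_mul_pos_right hp ha_p.le
  have compare (i : α) : a i * K i y * K p y' ≤ a i * K i y' * K p y := by
    obtain hpi | hip := le_or_gt p i
    · linarith [mul_le_mul_of_nonneg_left (hK hpi hy) (ha hpi ha_p)]
    obtain hai | hai := le_or_gt (a i) 0
    · linarith [mul_le_mul_of_nonpos_left (hK hip.le hy) hai]
    · have hzero : a i * K i y ≤ 0 := not_lt.1 fun h => hip.not_ge (hmin h hip.le)
      exact (mul_nonpos_of_nonpos_of_nonneg hzero (hnn p y')).trans
        (mul_nonneg (mul_nonneg hai.le (hnn i y')) hK_p.le)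
  refine nonneg_of_mul_nonneg_left ?_ hK_p
  calc 0 ≤ (∑ i, a i * K i y) * K p y' := mul_nonneg hpos.le (hnn p y')
    _ ≤ (∑ i, a i * K i y') * K p y := by
      rw [Finset.sum_mul, Finset.sum_mul]
      exact sum_le_sum fun i _ => compare i

end IsTP2

/-- The usual stochastic order between measures on a preordered space: `μ` charges every
measurable upper set at least as much as `ν`. -/
def StochasticLE {α : Type*} [Preorder α] [MeasurableSpace α] (ν μ : Measure α) : Prop :=
  ∀ ⦃S : Set α⦄, MeasurableSet S → IsUpperSet S → ν S ≤ μ S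

namespace StochasticLE

theorem lintegral_le {α : Type*} [Preorder α] [MeasurableSpace α] {ν μ : Measure α}
    (h : StochasticLE ν μ) {f : α → ℝ≥0∞} (hf : Measurable f) (hmono : Monotone f)
    (hf_top : ∀ x, f x ≠ ∞) : ∫⁻ x, f x ∂ν ≤ ∫⁻ x, f x ∂μ := by
  have layercake (ρ : Measure α) :
      ∫⁻ x, f x ∂ρ = ∫⁻ t in Set.Ioi 0, ρ {x | t < (f x).toReal} := by
    rw [← lintegral_eq_lintegral_meas_lt ρ (.of_forall fun _ => ENNReal.toReal_nonneg)
      hf.ennreal_toReal.aemeasurable]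
    simp only [ENNReal.ofReal_toReal (hf_top _)]
  rw [layercake, layercake]
  exact lintegral_mono fun t => h (measurableSet_lt measurable_const hf.ennreal_toReal)
    fun _ _ hxy hx => hx.trans_le (ENNReal.toReal_mono (hf_top _) (hmono hxy))

protected theorem map {α β : Type*} [Preorder α] [MeasurableSpace α] [Preorder β]
    [MeasurableSpace β] {ν μ : Measure α} (h : StochasticLE ν μ) {f : α → β}
    (hf : Measurable f) (hmono : Monotone f) : StochasticLE (ν.map f) (μ.map f) := by
  intro S hS hup
  rw [Measure.map_apply hf hS, Measure.map_apply hf hS]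
  exact h (hf hS) (hup.preimage hmono)

protected theorem prod {α β : Type*} [Preorder α] [MeasurableSpace α] [Preorder β]
    [MeasurableSpace β] {ν μ : Measure α} {ν' μ' : Measure β} [SFinite ν'] [IsFiniteMeasure μ']
    (h : StochasticLE ν μ) (h' : StochasticLE ν' μ') :
    StochasticLE (ν.prod ν') (μ.prod μ') := by
  intro S hS hup
  rw [Measure.prod_apply hS, Measure.prod_apply hS]
  calc ∫⁻ x, ν' (Prod.mk x ⁻¹' S) ∂ν
      ≤ ∫⁻ x, μ' (Prod.mk x ⁻¹' S) ∂ν := lintegral_mono fun x =>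
        h' (measurable_prodMk_left hS) fun _ _ hab hmem => hup (Prod.mk_le_mk.2 ⟨le_rfl, hab⟩) hmem
    _ ≤ ∫⁻ x, μ' (Prod.mk x ⁻¹' S) ∂μ :=
        h.lintegral_le (measurable_measure_prodMk_left hS)
          (fun _ _ hab => measure_mono fun _ hy => hup (Prod.mk_le_mk.2 ⟨hab, le_rfl⟩) hy)
          fun _ => measure_ne_top _ _

protected theorem pi {n : ℕ} {α : Fin n → Type*} [∀ i, Preorder (α i)]
    [∀ i, MeasurableSpace (α i)] {ν μ : ∀ i, Measure (α i)} [∀ i, IsFiniteMeasure (ν i)]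
    [∀ i, IsFiniteMeasure (μ i)] (h : ∀ i, StochasticLE (ν i) (μ i)) :
    StochasticLE (Measure.pi ν) (Measure.pi μ) := by
  induction n with
  | zero =>
    rw [Measure.pi_of_empty, Measure.pi_of_empty]
    exact fun _ _ _ => le_rfl
  | succ n ih =>
    rw [← (measurePreserving_piFinSuccAbove ν 0).symm.map_eq,
      ← (measurePreserving_piFinSuccAbove μ 0).symm.map_eq]
    refine ((h 0).prod (ih fun i => h _)).map (MeasurableEquiv.measurable _) ?_
    exact (Fin.insertNthOrderIso α 0).monotone

end StochasticLE

theorem measure_le_of_forall_mem_Ici_le {α : Type*} [LinearOrder α] [TopologicalSpace α]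
    [ClosedIicTopology α] [MeasurableSpace α] {μ : Measure α} [μ.InnerRegular] {S : Set α}
    (hS : MeasurableSet S) {r : ℝ≥0∞} (h : ∀ a ∈ S, μ (Set.Ici a) ≤ r) : μ S ≤ r := by
  rw [hS.measure_eq_iSup_isCompact]
  refine iSup₂_le fun K hKS => iSup_le fun hK => ?_
  obtain rfl | hKn := K.eq_empty_or_nonempty
  · simp only [measure_empty, zero_le]
  · obtain ⟨a, haK, ha⟩ := hK.exists_isLeast hKn
    exact (measure_mono ha).trans (h a (hKS haK))

theorem measure_le_of_forall_mem_Iic_le {α : Type*} [LinearOrder α] [TopologicalSpace α]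
    [ClosedIciTopology α] [MeasurableSpace α] {μ : Measure α} [μ.InnerRegular] {S : Set α}
    (hS : MeasurableSet S) {r : ℝ≥0∞} (h : ∀ a ∈ S, μ (Set.Iic a) ≤ r) : μ S ≤ r :=
  @measure_le_of_forall_mem_Ici_le αᵒᵈ _ _ _ _ μ ‹_› S hS r h

theorem StochasticLE.map_of_measure_Iic_le {α E : Type*} [LinearOrder α] [TopologicalSpace α]
    [OrderClosedTopology α] [MeasurableSpace α] [OpensMeasurableSpace α] [LinearOrder E]
    [MeasurableSpace E] {P Q : Measure α} [IsProbabilityMeasure P] [IsProbabilityMeasure Q]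
    [P.InnerRegular] [Q.InnerRegular] [NullSingletonClass P] {f g : α → E} (hf : Measurable f)
    (hg : Measurable g) (h : ∀ a z, g z < f a → Q (Set.Iic z) ≤ P (Set.Iic a)) :
    StochasticLE (P.map f) (Q.map g) := by
  intro S hS hup
  rw [Measure.map_apply hf hS, Measure.map_apply hg hS]
  refine measure_le_of_forall_mem_Ici_le (hf hS) fun a ha => ?_
  have hcompl : Q (g ⁻¹' S)ᶜ ≤ P (Set.Iic a) :=
    measure_le_of_forall_mem_Iic_le (hg hS).compl fun z hz =>
      h a z (not_le.1 fun hle => hz (hup hle ha))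
  calc P (Set.Ici a) = 1 - P (Set.Iic a) := by
        rw [← measure_congr Ioi_ae_eq_Ici, ← Set.compl_Iic, prob_compl_eq_one_sub measurableSet_Iic]
    _ ≤ 1 - Q (g ⁻¹' S)ᶜ := tsub_le_tsub_left hcompl 1
    _ = Q (g ⁻¹' S) := by rw [← prob_compl_eq_one_sub (hg hS).compl, compl_compl]

/-- The quantile transform matching the distribution function of `Q` to that of `P`: the largest
extended real `r` with `P (-∞, r) ≤ Q (-∞, z]`. Its values are extended reals because the set of
matching points may be empty or unbounded. -/
noncomputable def quantileMatch (P Q : Measure ℝ) (z : ℝ) : EReal :=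
  sSup ((fun a : ℝ => (a : EReal)) '' {a | P (Set.Iic a) ≤ Q (Set.Iic z)})

section QuantileMatch

variable {P Q P' Q' : Measure ℝ}

theorem quantileMatch_mono (P Q : Measure ℝ) : Monotone (quantileMatch P Q) := fun _ _ hz =>
  sSup_le_sSup (Set.image_mono fun _ ha => ha.trans (measure_mono (Set.Iic_subset_Iic.2 hz)))

theorem measure_Iic_le_of_coe_lt_quantileMatch {a z : ℝ} (h : (a : EReal) < quantileMatch P Q z) :
    P (Set.Iic a) ≤ Q (Set.Iic z) := by
  obtain ⟨_, ⟨b, hb, rfl⟩, hab⟩ := lt_sSup_iff.1 h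
  exact (measure_mono (Set.Iic_subset_Iic.2 (EReal.coe_lt_coe_iff.1 hab).le)).trans hb

theorem measure_Iic_le_of_quantileMatch_lt_coe {a z : ℝ} (h : quantileMatch P Q z < (a : EReal)) :
    Q (Set.Iic z) ≤ P (Set.Iic a) := by
  by_contra! hlt
  exact h.not_ge (le_sSup ⟨a, hlt.le, rfl⟩)

variable [IsProbabilityMeasure P'] [IsProbabilityMeasure Q']

theorem stochasticLE_map_quantileMatch [NullSingletonClass P']
    (h : ∀ a z, Q (Set.Iic z) ≤ P (Set.Iic a) → Q' (Set.Iic z) ≤ P' (Set.Iic a)) :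
    StochasticLE (P'.map Real.toEReal) (Q'.map (quantileMatch P Q)) :=
  .map_of_measure_Iic_le measurable_coe_real_ereal (quantileMatch_mono P Q).measurable
    fun a z hlt => h a z (measure_Iic_le_of_quantileMatch_lt_coe hlt)

theorem map_quantileMatch_stochasticLE [NullSingletonClass Q']
    (h : ∀ a z, P (Set.Iic a) ≤ Q (Set.Iic z) → P' (Set.Iic a) ≤ Q' (Set.Iic z)) :
    StochasticLE (Q'.map (quantileMatch P Q)) (P'.map Real.toEReal) :=
  .map_of_measure_Iic_le (quantileMatch_mono P Q).measurable measurable_coe_real_ereal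
    fun z a hlt => h a z (measure_Iic_le_of_coe_lt_quantileMatch hlt)

end QuantileMatch

/-- The set of points of `[-∞, ∞]^ι` lying strictly above some point of `S ⊆ ℝ^ι` in every
coordinate. -/
def strictUpperHull {ι : Type*} (S : Set (ι → ℝ)) : Set (ι → EReal) :=
  {e | ∃ y ∈ S, ∀ t, (y t : EReal) < e t}

section StrictUpperHull

variable {ι : Type*}

theorem isUpperSet_strictUpperHull (S : Set (ι → ℝ)) : IsUpperSet (strictUpperHull S) :=
  fun _ _ hle ⟨y, hyS, hy⟩ => ⟨y, hyS, fun t => (hy t).trans_le (hle t)⟩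

theorem isOpen_strictUpperHull [Finite ι] (S : Set (ι → ℝ)) : IsOpen (strictUpperHull S) := by
  have hUnion : strictUpperHull S = ⋃ y ∈ S, ⋂ t, {e | (y t : EReal) < e t} := by
    ext e
    simp only [strictUpperHull, Set.mem_ofPred_eq, Set.mem_iUnion, Set.mem_iInter, exists_prop]
  rw [hUnion]
  exact isOpen_biUnion fun y _ => isOpen_iInter_of_finite fun t =>
    isOpen_lt continuous_const (continuous_apply t)

-- An interior point of the upper closure can be lowered in all coordinates, and the frontier of
-- an upper set is Lebesgue null.
theorem ae_mem_strictUpperHull_of_mem [Fintype ι] (S : Set (ι → ℝ)) :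
    ∀ᵐ y : ι → ℝ, y ∈ S → (fun t => (y t : EReal)) ∈ strictUpperHull S := by
  have hfrontier : ∀ᵐ y : ι → ℝ, y ∉ frontier (upperClosure S : Set (ι → ℝ)) :=
    measure_eq_zero_iff_ae_notMem.1 (upperClosure S).upper.null_frontier
  filter_upwards [hfrontier] with y hy hyS
  have hint : y ∈ interior (upperClosure S : Set (ι → ℝ)) := by
    by_contra hni
    exact hy ⟨subset_closure (subset_upperClosure hyS), hni⟩
  have hlim : Tendsto (fun r : ℝ => fun t => y t - r) (𝓝[>] 0) (𝓝 y) := by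
    have hcont : Continuous fun r : ℝ => fun t => y t - r := by fun_prop
    simpa only [sub_zero] using (hcont.tendsto 0).mono_left nhdsWithin_le_nhds
  obtain ⟨r, hr, hr0⟩ :=
    ((hlim.eventually (mem_interior_iff_mem_nhds.1 hint)).and self_mem_nhdsWithin).exists
  obtain ⟨x, hxS, hx⟩ := mem_upperClosure.1 hr
  exact ⟨x, hxS, fun t => EReal.coe_lt_coe_iff.2 ((hx t).trans_lt (sub_lt_self _ hr0))⟩

end StrictUpperHull

namespace SingleCrossing

variable {α : Type*} [PartialOrder α] {ψ : α → ℝ} {x x' : α}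

theorem nonneg_of_le (hψ : SingleCrossing ψ) (hx : x ≤ x') (h : 0 ≤ ψ x) : 0 ≤ ψ x' := by
  obtain rfl | hlt := hx.eq_or_lt
  exacts [h, (hψ hlt).1 h]

theorem nonpos_of_le (hψ : SingleCrossing ψ) (hx : x ≤ x') (h : ψ x' ≤ 0) : ψ x ≤ 0 := by
  obtain rfl | hlt := hx.eq_or_lt
  exacts [h, (hψ hlt).2 h]

end SingleCrossing

theorem StochasticLE.pi_real_preimage_le {α β E : Type*} [MeasurableSpace α] [MeasurableSpace β]
    [Preorder E] [MeasurableSpace E] {k : ℕ} {P : Measure α} {Q : Measure β}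
    [IsFiniteMeasure P] [IsFiniteMeasure Q] {f : α → E} {g : β → E} (hf : Measurable f)
    (hg : Measurable g) (h : StochasticLE (P.map f) (Q.map g)) {U : Set (Fin k → E)}
    (hU : MeasurableSet U) (hup : IsUpperSet U) :
    (Measure.pi fun _ => P).real {v : Fin k → α | (fun t => f (v t)) ∈ U} ≤
      (Measure.pi fun _ => Q).real {v : Fin k → β | (fun t => g (v t)) ∈ U} := by
  have hpi := StochasticLE.pi (fun _ : Fin k => h) hU hup
  rw [← Measure.pi_map_pi fun _ => hf.aemeasurable, ← Measure.pi_map_pi fun _ => hg.aemeasurable,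
    Measure.map_apply (by fun_prop) hU, Measure.map_apply (by fun_prop) hU] at hpi
  exact ENNReal.toReal_mono (measure_ne_top _ _) hpi

-- The coupling is tuned at the state `s`; single crossing then turns it into a stochastic
-- comparison in one direction above `s` and in the other below, just as the sign of `a` requires.
theorem sum_mul_pi_real_le_sum_mul_pi_real_quantileMatch {ι : Type*} [LinearOrder ι] [Fintype ι]
    {k : ℕ} {P Q : ι → Measure ℝ} [∀ i, IsProbabilityMeasure (P i)]
    [∀ i, IsProbabilityMeasure (Q i)] [∀ i, NullSingletonClass (P i)]
    [∀ i, NullSingletonClass (Q i)]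
    (hPQ : ∀ b z, SingleCrossing fun i => (P i).real (Set.Iic b) - (Q i).real (Set.Iic z))
    {a : ι → ℝ} {s : ι} (ha_neg : ∀ i < s, a i ≤ 0) (ha_pos : ∀ i, s ≤ i → 0 ≤ a i)
    {U : Set (Fin k → EReal)} (hU : MeasurableSet U) (hup : IsUpperSet U) :
    ∑ i, a i * (Measure.pi fun _ => P i).real {v | (fun t => (v t : EReal)) ∈ U} ≤
      ∑ i, a i * (Measure.pi fun _ => Q i).real
        {v | (fun t => quantileMatch (P s) (Q s) (v t)) ∈ U} := by
  have hmatch := (quantileMatch_mono (P s) (Q s)).measurable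
  have real_le_iff {μ ν : Measure ℝ} [IsProbabilityMeasure μ] [IsProbabilityMeasure ν]
      {A B : Set ℝ} : μ A ≤ ν B ↔ μ.real A ≤ ν.real B :=
    (ENNReal.toReal_le_toReal (measure_ne_top _ _) (measure_ne_top _ _)).symm
  refine sum_le_sum fun i _ => ?_
  obtain his | hsi := lt_or_ge i s
  · refine mul_le_mul_of_nonpos_left (StochasticLE.pi_real_preimage_le hmatch
      measurable_coe_real_ereal (map_quantileMatch_stochasticLE fun b z hle => ?_) hU hup)
      (ha_neg i his)
    rw [real_le_iff, ← sub_nonpos] at hle ⊢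
    exact (hPQ b z).nonpos_of_le his.le hle
  · refine mul_le_mul_of_nonneg_left (StochasticLE.pi_real_preimage_le measurable_coe_real_ereal
      hmatch (stochasticLE_map_quantileMatch fun b z hle => ?_) hU hup) (ha_pos i hsi)
    rw [real_le_iff, ← sub_nonneg] at hle ⊢
    exact (hPQ b z).nonneg_of_le hsi hle

theorem measurableSet_coe_mem_strictUpperHull {ι : Type*} [Finite ι] (S : Set (ι → ℝ)) :
    MeasurableSet {v : ι → ℝ | (fun t => (v t : EReal)) ∈ strictUpperHull S} :=
  ((isOpen_strictUpperHull S).preimage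
    (continuous_pi fun t => continuous_coe_real_ereal.comp (continuous_apply t))).measurableSet

theorem integral_max_zero_eq_setIntegral_strictUpperHull {ι : Type*} [Fintype ι] {D : (ι → ℝ) → ℝ}
    (hD : ∀ ⦃y y'⦄, y ≤ y' → 0 < D y → 0 ≤ D y') :
    ∫ y, max (D y) 0 =
      ∫ y in {v | (fun t => (v t : EReal)) ∈ strictUpperHull {y | 0 < D y}}, D y := by
  classical
  rw [← integral_indicator (measurableSet_coe_mem_strictUpperHull _)]
  refine integral_congr_ae ?_
  filter_upwards [ae_mem_strictUpperHull_of_mem {y | 0 < D y}] with y hy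
  rw [Set.indicator_apply]
  split_ifs with hmem
  · obtain ⟨x, hx, hxy⟩ := hmem
    exact max_eq_left (hD (fun t => (EReal.coe_lt_coe_iff.1 (hxy t)).le) hx)
  · exact max_eq_right (not_lt.1 (mt hy hmem))

section SignChange

variable {ι : Type*} [LinearOrder ι] [Fintype ι] {f f' : ι → ℝ → ℝ} {a : ι → ℝ}

theorem IsTP2.integral_max_sum_mul_prod_eq {κ : Type*} [Fintype κ] (hTP2 : IsTP2 f)
    (hf : ∀ i, IsProbDensity (f i) volume) (ha : ∀ ⦃i j⦄, i ≤ j → 0 < a i → 0 ≤ a j) :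
    ∫ y : κ → ℝ, max (∑ i, a i * ∏ t, f i (y t)) 0 =
      ∑ i, a i * (Measure.pi fun _ => densityMeasure (f i) volume).real {v : κ → ℝ |
        (fun t => (v t : EReal)) ∈ strictUpperHull {y | 0 < ∑ i, a i * ∏ t, f i (y t)}} := by
  have hpi (i : ι) := IsProbDensity.pi fun _ : κ => hf i
  have hpi_eq (i : ι) := IsProbDensity.densityMeasure_pi fun _ : κ => hf i
  rw [integral_max_zero_eq_setIntegral_strictUpperHull fun y y' hle =>
    (hTP2.prod fun i => (hf i).nonneg).sum_mul_nonneg_of_pos (fun i => (hpi i).nonneg) ha hle]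
  simp only [← hpi_eq]
  exact (IsProbDensity.sum_mul_densityMeasure_real hpi a
    (measurableSet_coe_mem_strictUpperHull _)).symm

theorem IsTP2.integral_max_sum_mul_prod_le {k : ℕ} (hTP2 : IsTP2 f)
    (hf : ∀ i, IsProbDensity (f i) volume) (hf' : ∀ i, IsProbDensity (f' i) volume)
    (hff' : ∀ b z, SingleCrossing fun i => (densityMeasure (f i) volume).real (Set.Iic b)
      - (densityMeasure (f' i) volume).real (Set.Iic z))
    (ha : ∀ ⦃i j⦄, i ≤ j → 0 < a i → 0 ≤ a j) :
    ∫ y : Fin k → ℝ, max (∑ i, a i * ∏ t, f i (y t)) 0 ≤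
      ∫ y : Fin k → ℝ, max (∑ i, a i * ∏ t, f' i (y t)) 0 := by
  have hpi' (i : ι) := IsProbDensity.pi fun _ : Fin k => hf' i
  have hpi'_eq (i : ι) := IsProbDensity.densityMeasure_pi fun _ : Fin k => hf' i
  by_cases hpos : ∃ i, 0 < a i
  · obtain ⟨s, hs, hs_min⟩ := exists_minimal_of_wellFoundedLT _ hpos
    have hprob (i : ι) := (hf i).isProbabilityMeasure
    have hprob' (i : ι) := (hf' i).isProbabilityMeasure
    rw [hTP2.integral_max_sum_mul_prod_eq hf ha]
    refine (sum_mul_pi_real_le_sum_mul_pi_real_quantileMatch (s := s) hff'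
      (fun i hi => not_lt.1 fun h => hi.not_ge (hs_min h hi.le)) (fun i hi => ha hi hs)
      (isOpen_strictUpperHull _).measurableSet (isUpperSet_strictUpperHull _)).trans ?_
    simp only [← hpi'_eq]
    have hmatch := (quantileMatch_mono (densityMeasure (f s) volume)
      (densityMeasure (f' s) volume)).measurable
    exact IsProbDensity.sum_mul_densityMeasure_real_le hpi' a
      ((isOpen_strictUpperHull _).measurableSet.preimage (by fun_prop))
  · push Not at hpos
    rw [integral_congr_ae (.of_forall fun y => max_eq_right (sum_nonpos fun i _ =>
      mul_nonpos_of_nonpos_of_nonneg (hpos i) (prod_nonneg fun t _ => (hf i).nonneg (y t)))),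
      integral_zero]
    exact integral_nonneg fun y => le_max_right _ _

end SignChange

/-- The function agreeing with `φ` at the grid points `p 0, …, p (N + 1)` and affine between
them, written as an affine function plus hinges whose weights are the jumps of the slope. -/
noncomputable def hingeInterpolant (φ : ℝ → ℝ) (p : ℕ → ℝ) (N : ℕ) (x : ℝ) : ℝ :=
  φ (p 0) + slope φ (p 0) (p 1) * (x - p 0) +
    ∑ j ∈ range N, (slope φ (p (j + 1)) (p (j + 2)) - slope φ (p j) (p (j + 1))) *
      max (x - p (j + 1)) 0

section HingeInterpolant

variable {φ : ℝ → ℝ} {p : ℕ → ℝ} {N i : ℕ} {x : ℝ}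

theorem hingeInterpolant_eq_of_le (hp : Monotone p) (hx : p N ≤ x) :
    hingeInterpolant φ p N x = φ (p N) + slope φ (p N) (p (N + 1)) * (x - p N) := by
  induction N with
  | zero => simp only [hingeInterpolant, range_zero, sum_empty, add_zero]
  | succ N ih =>
    have hslope := sub_smul_slope φ (p N) (p (N + 1))
    rw [smul_eq_mul, vsub_eq_sub] at hslope
    have hprev := ih ((hp N.le_succ).trans hx)
    rw [hingeInterpolant] at hprev ⊢
    rw [sum_range_succ, ← add_assoc, hprev, max_eq_left (sub_nonneg.2 hx)]
    linear_combination hslope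

theorem hingeInterpolant_eq_of_mem_Icc (hp : Monotone p) (hi : i ≤ N)
    (hx : x ∈ Set.Icc (p i) (p (i + 1))) :
    hingeInterpolant φ p N x = φ (p i) + slope φ (p i) (p (i + 1)) * (x - p i) := by
  induction N, hi using Nat.le_induction with
  | base => exact hingeInterpolant_eq_of_le hp hx.1
  | succ N hiN ih =>
    rw [← ih, hingeInterpolant, hingeInterpolant, sum_range_succ, max_eq_right
      (sub_nonpos.2 (hx.2.trans (hp (Nat.succ_le_succ hiN)))), mul_zero, add_zero]

theorem hingeInterpolant_mem_segment (hp : StrictMono p) (hi : i ≤ N)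
    (hx : x ∈ Set.Icc (p i) (p (i + 1))) :
    hingeInterpolant φ p N x ∈ segment ℝ (φ (p i)) (φ (p (i + 1))) := by
  have hlt : p i < p (i + 1) := hp i.lt_succ_self
  rw [hingeInterpolant_eq_of_mem_Icc hp.monotone hi hx, segment_eq_image']
  refine ⟨(x - p i) / (p (i + 1) - p i), ⟨div_nonneg (sub_nonneg.2 hx.1) (sub_nonneg.2 hlt.le),
    div_le_one_of_le₀ (by linarith [hx.2]) (sub_nonneg.2 hlt.le)⟩, ?_⟩
  simp only [slope_def_field, smul_eq_mul]
  ring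

theorem slope_le_slope_succ_of_convexOn (hφ : ConvexOn ℝ Set.univ φ) (hp : StrictMono p) (j : ℕ) :
    slope φ (p j) (p (j + 1)) ≤ slope φ (p (j + 1)) (p (j + 2)) := by
  simpa only [slope_def_field] using
    hφ.slope_mono_adjacent trivial trivial (hp j.lt_succ_self) (hp (j + 1).lt_succ_self)

end HingeInterpolant

theorem exists_dist_hingeInterpolant_lt {φ : ℝ → ℝ} (hφ : Continuous φ) (a b : ℝ) {ε : ℝ}
    (hε : 0 < ε) :
    ∃ p : ℕ → ℝ, StrictMono p ∧
      ∃ N, ∀ x ∈ Set.Icc a b, dist (hingeInterpolant φ p N x) (φ x) < ε := by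
  obtain ⟨δ, hδ, huc⟩ := Metric.uniformContinuousOn_iff.1
    ((isCompact_Icc (a := a) (b := b + 1)).uniformContinuousOn_of_continuous hφ.continuousOn) ε hε
  obtain ⟨h, hh_pos, hh⟩ := exists_between (lt_min one_pos hδ)
  obtain ⟨hh_one, hh_δ⟩ := lt_min_iff.1 hh
  have hp : StrictMono fun j : ℕ => a + j * h := 
    (Nat.strictMono_cast.mul_const hh_pos).const_add a
  refine ⟨_, hp, ⌊(b - a) / h⌋₊, fun x hx => ?_⟩
  set i := ⌊(x - a) / h⌋₊
  have hi_le : i * h ≤ x - a := (le_div_iff₀ hh_pos).1 <|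
    Nat.floor_le (div_nonneg (sub_nonneg.2 hx.1) hh_pos.le)
  have hi_lt : x - a < (i + 1 : ℕ) * h := (div_lt_iff₀ hh_pos).1 <| by
    exact_mod_cast Nat.lt_floor_add_one ((x - a) / h)
  have hi_succ : ((i + 1 : ℕ) : ℝ) * h = i * h + h := by push_cast; ring
  have near {y : ℝ} (hay : a ≤ y) (hy : |y - x| ≤ h) : φ y ∈ Metric.ball (φ x) ε :=
    huc y ⟨hay, by linarith [(abs_le.1 hy).2, hx.2]⟩ x ⟨hx.1, by linarith [hx.2]⟩
      (hy.trans_lt hh_δ)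
  have hi_nonneg : 0 ≤ i * h := by positivity
  exact (convex_ball (φ x) ε).segment_subset
    (near (by linarith) (abs_le.2 ⟨by linarith, by linarith⟩))
    (near (by linarith) (abs_le.2 ⟨by linarith, by linarith⟩))
    (hingeInterpolant_mem_segment hp (Nat.floor_mono (by gcongr; exact hx.2))
      ⟨by linarith, by linarith⟩)

theorem integrable_of_ae_mem_Icc {ν : Measure ℝ} [IsFiniteMeasure ν] {a b : ℝ}
    (hν : ∀ᵐ x ∂ν, x ∈ Set.Icc a b) {f : ℝ → ℝ} (hf : Continuous f) : Integrable f ν := by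
  rw [← Measure.restrict_eq_self_of_ae_mem hν]
  exact hf.continuousOn.integrableOn_compact isCompact_Icc

section ConvexOrder

variable {a b : ℝ} {φ : ℝ → ℝ}

theorem continuous_hingeInterpolant (φ : ℝ → ℝ) (p : ℕ → ℝ) (N : ℕ) :
    Continuous (hingeInterpolant φ p N) := by
  unfold hingeInterpolant
  fun_prop

theorem integral_hingeInterpolant {ν : Measure ℝ} [IsProbabilityMeasure ν]
    (hν : ∀ᵐ x ∂ν, x ∈ Set.Icc a b) (φ : ℝ → ℝ) (p : ℕ → ℝ) (N : ℕ) :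
    ∫ x, hingeInterpolant φ p N x ∂ν =
      φ (p 0) + slope φ (p 0) (p 1) * (∫ x, x ∂ν - p 0) +
        ∑ j ∈ range N, (slope φ (p (j + 1)) (p (j + 2)) - slope φ (p j) (p (j + 1))) *
          ∫ x, max (x - p (j + 1)) 0 ∂ν := by
  have hint {f : ℝ → ℝ} (hf : Continuous f) : Integrable f ν :=
    integrable_of_ae_mem_Icc hν hf
  simp only [hingeInterpolant]
  rw [integral_add (hint (by fun_prop)) (hint (by fun_prop)),
    integral_add (integrable_const _) (hint (by fun_prop)), integral_const_mul,
    integral_sub (hint continuous_id') (integrable_const _),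
    integral_finsetSum _ fun j _ => hint (by fun_prop)]
  simp only [integral_const_mul, integral_const, probReal_univ, one_smul]

theorem integral_hingeInterpolant_le {ν₁ ν₂ : Measure ℝ} [IsProbabilityMeasure ν₁]
    [IsProbabilityMeasure ν₂] (hν₁ : ∀ᵐ x ∂ν₁, x ∈ Set.Icc a b)
    (hν₂ : ∀ᵐ x ∂ν₂, x ∈ Set.Icc a b) (hmean : ∫ x, x ∂ν₁ = ∫ x, x ∂ν₂)
    (hhinge : ∀ c, ∫ x, max (x - c) 0 ∂ν₁ ≤ ∫ x, max (x - c) 0 ∂ν₂)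
    (hφ : ConvexOn ℝ Set.univ φ) {p : ℕ → ℝ} (hp : StrictMono p) (N : ℕ) :
    ∫ x, hingeInterpolant φ p N x ∂ν₁ ≤ ∫ x, hingeInterpolant φ p N x ∂ν₂ := by
  rw [integral_hingeInterpolant hν₁, integral_hingeInterpolant hν₂, hmean]
  exact add_le_add_right (sum_le_sum fun j _ => mul_le_mul_of_nonneg_left (hhinge _)
    (sub_nonneg.2 (slope_le_slope_succ_of_convexOn hφ hp j))) _

theorem dist_integral_le_of_ae_dist_le {Ω : Type*} [MeasurableSpace Ω] {ν : Measure Ω}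
    [IsProbabilityMeasure ν] {f g : Ω → ℝ} (hf : Integrable f ν) (hg : Integrable g ν) {ε : ℝ}
    (h : ∀ᵐ x ∂ν, dist (f x) (g x) ≤ ε) : dist (∫ x, f x ∂ν) (∫ x, g x ∂ν) ≤ ε := by
  rw [dist_eq_norm, ← integral_sub hf hg]
  simpa only [probReal_univ, mul_one] using
    norm_integral_le_of_norm_le_const
      (h.mono fun x hx => (dist_eq_norm (f x) (g x)).symm.trans_le hx)

theorem integral_le_integral_of_integral_hinge_le {ν₁ ν₂ : Measure ℝ} [IsProbabilityMeasure ν₁]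
    [IsProbabilityMeasure ν₂] (hν₁ : ∀ᵐ x ∂ν₁, x ∈ Set.Icc a b)
    (hν₂ : ∀ᵐ x ∂ν₂, x ∈ Set.Icc a b) (hmean : ∫ x, x ∂ν₁ = ∫ x, x ∂ν₂)
    (hhinge : ∀ c, ∫ x, max (x - c) 0 ∂ν₁ ≤ ∫ x, max (x - c) 0 ∂ν₂)
    (hφ : ConvexOn ℝ Set.univ φ) : ∫ x, φ x ∂ν₁ ≤ ∫ x, φ x ∂ν₂ := by
  have hφc : Continuous φ := continuousOn_univ.1 (hφ.continuousOn isOpen_univ)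
  refine le_of_forall_pos_le_add fun ε hε => ?_
  obtain ⟨p, hp, N, hN⟩ := exists_dist_hingeInterpolant_lt hφc a b (half_pos hε)
  have approx {ν : Measure ℝ} [IsProbabilityMeasure ν] (hν : ∀ᵐ x ∂ν, x ∈ Set.Icc a b) :
      |∫ x, hingeInterpolant φ p N x ∂ν - ∫ x, φ x ∂ν| ≤ ε / 2 :=
    dist_integral_le_of_ae_dist_le
      (integrable_of_ae_mem_Icc hν (continuous_hingeInterpolant φ p N))
      (integrable_of_ae_mem_Icc hν hφc) (hν.mono fun x hx => (hN x hx).le)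
  linarith [(abs_le.1 (approx hν₁)).1, (abs_le.1 (approx hν₂)).2,
    integral_hingeInterpolant_le hν₁ hν₂ hmean hhinge hφ hp N]

end ConvexOrder

section PosteriorMean

variable {X k : ℕ} {B : Fin X → ℝ → ℝ} {g π : Fin X → ℝ} {a b : ℝ}

theorem densityMeasure_real_Iic_eq_obsCdf {x : Fin X} (hB : IsProbDensity (B x) volume) (y : ℝ) :
    (densityMeasure (B x) volume).real (Set.Iic y) = obsCdf B y x :=
  hB.densityMeasure_real_apply measurableSet_Iic

theorem isProbDensity_nrm (hB : ∀ x, IsProbDensity (B x) volume) (hπ : ∀ i, 0 ≤ π i)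
    (hπ_sum : ∑ i, π i = 1) : IsProbDensity (nrm (k := k) B π) volume :=
  .sum_mul (fun i => .pi fun _ => hB i) hπ hπ_sum

-- This also holds when `nrm B π ys = 0`, as every summand then vanishes.
theorem cmean_mul_nrm (hB : ∀ x y, 0 ≤ B x y) (hπ : ∀ i, 0 ≤ π i) (g : Fin X → ℝ)
    (ys : Fin k → ℝ) : cmean B g π ys * nrm B π ys = ∑ i, g i * (π i * ∏ t, B i (ys t)) := by
  refine div_mul_cancel_of_imp fun hzero => sum_eq_zero fun i hi => ?_
  rw [nrm, sum_eq_zero_iff_of_nonneg fun i _ =>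
    mul_nonneg (hπ i) (prod_nonneg fun t _ => hB i (ys t))] at hzero
  rw [hzero i hi, mul_zero]

theorem cmean_mem_Icc (hB : ∀ x y, 0 ≤ B x y) (hπ : ∀ i, 0 ≤ π i)
    (hg : ∀ i, g i ∈ Set.Icc a b) {ys : Fin k → ℝ} (hys : 0 < nrm B π ys) :
    cmean B g π ys ∈ Set.Icc a b := by
  have hweight (i : Fin X) : 0 ≤ π i * ∏ t, B i (ys t) :=
    mul_nonneg (hπ i) (prod_nonneg fun t _ => hB i (ys t))
  constructor
  · rw [cmean, le_div_iff₀ hys, nrm, mul_sum]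
    exact sum_le_sum fun i _ => mul_le_mul_of_nonneg_right (hg i).1 (hweight i)
  · rw [cmean, div_le_iff₀ hys, nrm, mul_sum]
    exact sum_le_sum fun i _ => mul_le_mul_of_nonneg_right (hg i).2 (hweight i)

theorem aemeasurable_cmean (hB : ∀ x, IsProbDensity (B x) volume) :
    AEMeasurable (cmean (k := k) B g π) := by
  have hprod (i : Fin X) : AEMeasurable fun ys : Fin k → ℝ => ∏ t, B i (ys t) :=
    (IsProbDensity.pi fun _ => hB i).integrable.aemeasurable
  unfold cmean nrm
  fun_prop

/-- The law of the conditional mean `m(y_{1:k}, π)` when the observations have density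
`σ(π, ·)`. -/
noncomputable def posteriorMeanLaw (B : Fin X → ℝ → ℝ) (g π : Fin X → ℝ) (k : ℕ) : Measure ℝ :=
  (densityMeasure (nrm (k := k) B π) volume).map (cmean B g π)

section

variable (hB : ∀ x, IsProbDensity (B x) volume) (hπ : ∀ i, 0 ≤ π i) (hπ_sum : ∑ i, π i = 1)

include hB in
theorem aemeasurable_cmean_densityMeasure_nrm :
    AEMeasurable (cmean B g π) (densityMeasure (nrm (k := k) B π) volume) :=
  (aemeasurable_cmean hB).mono_ac (withDensity_absolutelyContinuous _ _)

include hB hπ hπ_sum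

theorem isProbabilityMeasure_posteriorMeanLaw :
    IsProbabilityMeasure (posteriorMeanLaw B g π k) :=
  have := (isProbDensity_nrm (k := k) hB hπ hπ_sum).isProbabilityMeasure
  Measure.isProbabilityMeasure_map (aemeasurable_cmean_densityMeasure_nrm hB)

theorem ae_posteriorMeanLaw_mem_Icc (hg : ∀ i, g i ∈ Set.Icc a b) :
    ∀ᵐ x ∂posteriorMeanLaw B g π k, x ∈ Set.Icc a b := by
  refine (ae_map_iff (aemeasurable_cmean_densityMeasure_nrm hB) measurableSet_Icc).2 ?_
  rw [ae_withDensity_iff' (isProbDensity_nrm hB hπ hπ_sum).integrable.aemeasurable.ennreal_ofReal]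
  exact .of_forall fun ys hys => cmean_mem_Icc (fun x => (hB x).nonneg) hπ hg
    (ENNReal.ofReal_pos.1 (pos_iff_ne_zero.2 hys))

theorem integral_posteriorMeanLaw {f : ℝ → ℝ} (hf : Continuous f) :
    ∫ x, f x ∂posteriorMeanLaw B g π k =
      ∫ ys : Fin k → ℝ, f (cmean B g π ys) * nrm B π ys := by
  rw [posteriorMeanLaw, integral_map (aemeasurable_cmean_densityMeasure_nrm hB)
    hf.aestronglyMeasurable, (isProbDensity_nrm hB hπ hπ_sum).integral_densityMeasure]

theorem integral_id_posteriorMeanLaw : ∫ x, x ∂posteriorMeanLaw B g π k = ∑ i, g i * π i := by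
  rw [integral_posteriorMeanLaw hB hπ hπ_sum continuous_id']
  simp only [cmean_mul_nrm (fun x => (hB x).nonneg) hπ, ← mul_assoc]
  exact IsProbDensity.integral_sum_mul (fun i => .pi fun _ => hB i) _

theorem integral_hinge_posteriorMeanLaw (c : ℝ) :
    ∫ x, max (x - c) 0 ∂posteriorMeanLaw B g π k =
      ∫ ys : Fin k → ℝ, max (∑ i, π i * (g i - c) * ∏ t, B i (ys t)) 0 := by
  rw [integral_posteriorMeanLaw hB hπ hπ_sum (by fun_prop)]
  refine integral_congr_ae (.of_forall fun ys => ?_)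
  dsimp only
  rw [max_mul_of_nonneg _ _ ((isProbDensity_nrm hB hπ hπ_sum).nonneg ys), zero_mul, sub_mul,
    cmean_mul_nrm (fun x => (hB x).nonneg) hπ, nrm, mul_sum, ← sum_sub_distrib]
  congr 1
  exact sum_congr rfl fun i _ => by ring

end

end PosteriorMean

theorem stmt_1_general {X : ℕ} {B₁ B₂ : Fin X → ℝ → ℝ} (hB₁ : ∀ x, IsProbDensity (B₁ x) volume)
    (hB₂ : ∀ x, IsProbDensity (B₂ x) volume) (hTP2 : IsTP2 B₁)
    (hA2 : ∀ ybar y, SingleCrossing fun x => obsCdf B₁ ybar x - obsCdf B₂ y x)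
    {g : Fin X → ℝ} (hg : Monotone g) {π : Fin X → ℝ} (hπ : ∀ i, 0 ≤ π i)
    (hπ_sum : ∑ i, π i = 1) (k : ℕ) {φ : ℝ → ℝ} (hφ : ConvexOn ℝ Set.univ φ) :
    ∫ ys : Fin k → ℝ, φ (cmean B₁ g π ys) * nrm B₁ π ys ≤
      ∫ ys : Fin k → ℝ, φ (cmean B₂ g π ys) * nrm B₂ π ys := by
  have hφc : Continuous φ := continuousOn_univ.1 (hφ.continuousOn isOpen_univ)
  obtain ⟨a, ha⟩ := (Set.finite_range g).bddBelow
  obtain ⟨b, hb⟩ := (Set.finite_range g).bddAbove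
  have hgab (i : Fin X) : g i ∈ Set.Icc a b := ⟨ha ⟨i, rfl⟩, hb ⟨i, rfl⟩⟩
  have hlaw₁ := isProbabilityMeasure_posteriorMeanLaw (g := g) (k := k) hB₁ hπ hπ_sum
  have hlaw₂ := isProbabilityMeasure_posteriorMeanLaw (g := g) (k := k) hB₂ hπ hπ_sum
  rw [← integral_posteriorMeanLaw hB₁ hπ hπ_sum hφc, ← integral_posteriorMeanLaw hB₂ hπ hπ_sum hφc]
  refine integral_le_integral_of_integral_hinge_le (ae_posteriorMeanLaw_mem_Icc hB₁ hπ hπ_sum hgab)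
    (ae_posteriorMeanLaw_mem_Icc hB₂ hπ hπ_sum hgab) ?_ (fun c => ?_) hφ
  · rw [integral_id_posteriorMeanLaw hB₁ hπ hπ_sum, integral_id_posteriorMeanLaw hB₂ hπ hπ_sum]
  · rw [integral_hinge_posteriorMeanLaw hB₁ hπ hπ_sum,
      integral_hinge_posteriorMeanLaw hB₂ hπ hπ_sum]
    refine hTP2.integral_max_sum_mul_prod_le hB₁ hB₂ ?_ ?_
    · simp only [densityMeasure_real_Iic_eq_obsCdf, hB₁, hB₂]
      exact hA2
    · intro i j hij hi
      have := pos_of_mul_pos_right hi (hπ i)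
      exact mul_nonneg (hπ j) (by linarith [hg hij])

/-- **Global convex dominance for finite-state Bayesian localization with
real-valued observations.**  Under (A1) TP2, (A2) single crossing and (SMA),
for every horizon `k ≥ 1`, every prior `π` and every convex `φ` for which the
integrals exist,
`∫ φ(m₁(y_{1:k},π)) σ(π,y_{1:k},1) dy ≤ ∫ φ(m₂(y_{1:k},π)) σ(π,y_{1:k},2) dy`. -/
theorem stmt_1 (X : ℕ) (B₁ B₂ : Fin X → ℝ → ℝ)
    (hB₁c : ∀ x, Continuous (B₁ x)) (hB₂c : ∀ x, Continuous (B₂ x))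
    (hB₁nn : ∀ x y, 0 ≤ B₁ x y) (hB₂nn : ∀ x y, 0 ≤ B₂ x y)
    (hB₁int : ∀ x, ∫ y, B₁ x y = 1) (hB₂int : ∀ x, ∫ y, B₂ x y = 1)
    (hB₁pos : ∀ y : ℝ, ∃ x, 0 < B₁ x y) (hB₂pos : ∀ y : ℝ, ∃ x, 0 < B₂ x y)
    (g : Fin X → ℝ) (hg : StrictMono g)
    -- (A1): TP2 observation kernels
    (hA1₁ : ∀ (x x' : Fin X) (y y' : ℝ), x ≤ x' → y ≤ y' →
      B₁ x y' * B₁ x' y ≤ B₁ x y * B₁ x' y')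
    (hA1₂ : ∀ (x x' : Fin X) (y y' : ℝ), x ≤ x' → y ≤ y' →
      B₂ x y' * B₂ x' y ≤ B₂ x y * B₂ x' y')
    -- (A2): single crossing condition
    (hA2 : ∀ ybar y : ℝ,
      SingleCrossing (fun x : Fin X => obsCdf B₁ ybar x - obsCdf B₂ y x))
    -- (SMA): product single crossing of complementary cdfs
    (hSMA : ∀ (j : ℕ), 1 ≤ j → ∀ (ys ybars : Fin j → ℝ),
      SingleCrossing (fun x : Fin X =>
        (∏ t, (1 - obsCdf B₂ (ys t) x)) - ∏ t, (1 - obsCdf B₁ (ybars t) x)))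
    -- prior
    (π : Fin X → ℝ) (hπnn : ∀ i, 0 ≤ π i) (hπ : ∑ i, π i = 1)
    (k : ℕ) (hk : 1 ≤ k)
    (φ : ℝ → ℝ) (hφ : ConvexOn ℝ Set.univ φ)
    (hint₁ : Integrable (fun ys : Fin k → ℝ => φ (cmean B₁ g π ys) * nrm B₁ π ys))
    (hint₂ : Integrable (fun ys : Fin k → ℝ => φ (cmean B₂ g π ys) * nrm B₂ π ys)) :
    (∫ ys : Fin k → ℝ, φ (cmean B₁ g π ys) * nrm B₁ π ys) ≤
      ∫ ys : Fin k → ℝ, φ (cmean B₂ g π ys) * nrm B₂ π ys :=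
  stmt_1_general (fun x => ⟨hB₁nn x, hB₁int x⟩) (fun x => ⟨hB₂nn x, hB₂int x⟩)
    (fun _ _ _ _ => hA1₁ _ _ _ _) hA2 hg.monotone hπnn hπ k hφ
end

section
/- Two power law noises: consider the additive localization model with sensor u ∈ {1,2} noise density p_u(w) = (α_u − 1)(1 + w)^{−α_u} on w ≥ 0, where α_2 > α_1 > 1. Then global convex dominance holds: for every horizon k ≥ 1, every prior density π_0 with finite second moment, and every convex function φ : ℝ → ℝ for which the integrals exist, ∫ φ(m_1(y_{1:k}, π_0)) σ(π_0, y_{1:k}, 1) dy_{1:k} ≤ ∫ φ(m_2(y_{1:k}, π_0)) σ(π_0, y_{1:k}, 2) dy_{1:k}; in particular MSE{m_1(Y^{(1)}_{1:k}, π_0)} ≥ MSE{m_2(Y^{(2)}_{1:k}, π_0)} for all k. -/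
open MeasureTheory Finset

/-- Power-law noise density `p(w) = (α-1)(1+w)^{-α}` on `w ≥ 0` (real power). -/
noncomputable def powerDens (a : ℝ) (w : ℝ) : ℝ :=
  if 0 ≤ w then (a - 1) * (1 + w) ^ (-a) else 0

/-- Normalizer `σ(π₀, y_{1:k}) = ∫ π₀(x) Π_t p(y_t - x) dx` for the additive
model with noise density `p` (supported on `[0,∞)`). -/
noncomputable def nrmA (p : ℝ → ℝ) (π₀ : ℝ → ℝ) {k : ℕ} (ys : Fin k → ℝ) : ℝ :=
  ∫ x, π₀ x * ∏ t, p (ys t - x)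

/-- Conditional mean for the additive model. -/
noncomputable def cmeanA (p : ℝ → ℝ) (π₀ : ℝ → ℝ) {k : ℕ} (ys : Fin k → ℝ) : ℝ :=
  (∫ x, x * (π₀ x * ∏ t, p (ys t - x))) / nrmA p π₀ ys

/-- Mean square error of the conditional mean at horizon `k`. -/
noncomputable def mseA (p : ℝ → ℝ) (π₀ : ℝ → ℝ) (k : ℕ) : ℝ :=
  ∫ ys : Fin k → ℝ, ∫ x, (x - cmeanA p π₀ ys) ^ 2 * (π₀ x * ∏ t, p (ys t - x))

/-!
Sensor 1 is a garbling of sensor 2: `p₁` is the convolution of `p₂` with a probability measure, so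
sensor 1 is obtained from sensor 2 by adding further independent noise. The posterior mean of
sensor 1 is then a `σ₂`-weighted average of posterior means of sensor 2, and Jensen's inequality
gives the dominance. As the mean square error is the second moment of the prior minus `∫ m² σ`, its
monotonicity is the case `φ = x²`.

Dividing `p₁ = c p₂ + p₂ ⋆ n` by `p₂` and differentiating turns it into a Volterra equation for the
density `n`. Its source is nonnegative because the decay rate of `p₂` exceeds that of `p₁`, its
kernel because `p₂` is log-convex, so successive approximations increase to a solution `n ≥ 0`. For
the power laws the logarithmic derivative is `-α / (1 + w)`.
-/

open scoped ENNReal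

/-! ### Linear integral equations with a supersolution -/

theorem exists_eq_add_lintegral_of_add_lintegral_le {α : Type*} [MeasurableSpace α]
    (κ : ProbabilityTheory.Kernel α α) {h E : α → ℝ≥0∞} (hh : Measurable h)
    (hE : ∀ w, h w + ∫⁻ s, E s ∂κ w ≤ E w) :
    ∃ n, Measurable n ∧ n ≤ E ∧ ∀ w, n w = h w + ∫⁻ s, n s ∂κ w := by
  let T : (α → ℝ≥0∞) → α → ℝ≥0∞ := fun n w => h w + ∫⁻ s, n s ∂κ w
  have hT : Monotone T := fun m n hmn w => add_le_add_right (lintegral_mono hmn) (h w)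
  have hmono : Monotone fun j => T^[j] 0 :=
    hT.monotone_iterate_of_le_map fun _ => zero_le
  have hmeas (j : ℕ) : Measurable (T^[j] 0) := by
    induction j with
    | zero => exact measurable_zero
    | succ j ih =>
      rw [Function.iterate_succ_apply']
      exact hh.add ih.lintegral_kernel
  have hle (j : ℕ) : T^[j] 0 ≤ E := by
    induction j with
    | zero => exact fun _ => zero_le
    | succ j ih =>
      rw [Function.iterate_succ_apply']
      exact (hT ih).trans hE
  refine ⟨fun w => ⨆ j, T^[j] 0 w, .iSup hmeas, fun w => iSup_le fun j => hle j w, fun w => ?_⟩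
  calc ⨆ j, T^[j] 0 w = ⨆ j, T^[j + 1] 0 w :=
        (Monotone.iSup_nat_add (fun _ _ hij => hmono hij w) 1).symm
    _ = ⨆ j, (h w + ∫⁻ s, T^[j] 0 s ∂κ w) := by simp only [Function.iterate_succ_apply', T]
    _ = h w + ∫⁻ s, ⨆ j, T^[j] 0 s ∂κ w := by
        rw [lintegral_iSup hmeas hmono, ENNReal.add_iSup]

/-! ### Integrals over intervals and triangles -/

theorem setLIntegral_Ioo_ofReal_of_hasDerivAt {F F' : ℝ → ℝ} {a b : ℝ} (hab : a ≤ b)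
    (hcont : ContinuousOn F (Set.Icc a b)) (hderiv : ∀ x ∈ Set.Ioo a b, HasDerivAt F (F' x) x)
    (hnonneg : ∀ x ∈ Set.Ioo a b, 0 ≤ F' x) :
    ∫⁻ x in Set.Ioo a b, ENNReal.ofReal (F' x) = ENNReal.ofReal (F b - F a) := by
  have hint : IntegrableOn F' (Set.Ioc a b) :=
    intervalIntegral.integrableOn_deriv_of_nonneg hcont hderiv hnonneg
  rw [← intervalIntegral.integral_eq_sub_of_hasDerivAt_of_le hab hcont hderiv
      ((intervalIntegrable_iff_integrableOn_Ioc_of_le hab).2 hint),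
    intervalIntegral.integral_of_le hab, integral_Ioc_eq_integral_Ioo,
    ofReal_integral_eq_lintegral_ofReal (hint.mono_set Set.Ioo_subset_Ioc_self)
      (ae_restrict_of_forall_mem measurableSet_Ioo hnonneg)]

theorem lintegral_lintegral_Ioo_swap {F : ℝ → ℝ → ℝ≥0∞} (hF : Measurable (Function.uncurry F))
    (a b : ℝ) :
    ∫⁻ u in Set.Ioo a b, ∫⁻ s in Set.Ioo a u, F u s =
      ∫⁻ s in Set.Ioo a b, ∫⁻ u in Set.Ioo s b, F u s := by
  have hmeas : Measurable fun p : ℝ × ℝ => (Set.Iio p.1).indicator (F p.1) p.2 :=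
    hF.indicator (measurableSet_lt measurable_snd measurable_fst)
  have hleft : ∀ u ∈ Set.Ioo a b, Set.Iio u ∩ Set.Ioo a b = Set.Ioo a u := by grind
  have hright : ∀ s ∈ Set.Ioo a b, Set.Ioi s ∩ Set.Ioo a b = Set.Ioo s b := by grind
  calc _ = ∫⁻ u in Set.Ioo a b, ∫⁻ s in Set.Ioo a b, (Set.Iio u).indicator (F u) s :=
        setLIntegral_congr_fun measurableSet_Ioo fun u hu => by
          simp only [setLIntegral_indicator measurableSet_Iio, hleft u hu]
    _ = ∫⁻ s in Set.Ioo a b, ∫⁻ u in Set.Ioo a b, (Set.Ioi s).indicator (fun u => F u s) u :=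
        lintegral_lintegral_swap hmeas.aemeasurable
    _ = _ := setLIntegral_congr_fun measurableSet_Ioo fun s hs => by
        simp only [setLIntegral_indicator measurableSet_Ioi, hright s hs]

/-! ### Deconvolution of log-convex densities -/

theorem hasDerivAt_div_of_logDeriv {f g : ℝ → ℝ} {x : ℝ} (hf : DifferentiableAt ℝ f x)
    (hg : DifferentiableAt ℝ g x) (hfx : f x ≠ 0) (hgx : g x ≠ 0) :
    HasDerivAt (fun u => f u / g u) ((logDeriv f x - logDeriv g x) * (f x / g x)) x := by
  refine (hf.hasDerivAt.fun_div hg.hasDerivAt hgx).congr_deriv ?_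
  simp only [logDeriv_apply]
  field_simp

/-- A nonincreasing probability density of nonnegative noise, positive and continuous on `[0, ∞)`
and differentiable inside; the jump at `0` is why regularity is only asked for on one side. -/
structure IsDecayingDensity (p : ℝ → ℝ) : Prop where
  eq_zero_of_neg : ∀ ⦃w⦄, w < 0 → p w = 0
  pos : ∀ ⦃w⦄, 0 ≤ w → 0 < p w
  antitoneOn : AntitoneOn p (Set.Ici 0)
  continuousOn : ContinuousOn p (Set.Ici 0)
  differentiableAt : ∀ ⦃w⦄, 0 < w → DifferentiableAt ℝ p w
  integral_eq_one : ∫ w, p w = 1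

namespace IsDecayingDensity

variable {p q : ℝ → ℝ}

theorem nonneg (hp : IsDecayingDensity p) (w : ℝ) : 0 ≤ p w :=
  (lt_or_ge w 0).elim (fun hw => (hp.eq_zero_of_neg hw).ge) fun hw => (hp.pos hw).le

theorem le_apply_zero (hp : IsDecayingDensity p) (w : ℝ) : p w ≤ p 0 :=
  (lt_or_ge w 0).elim (fun hw => hp.eq_zero_of_neg hw ▸ hp.nonneg 0) fun hw =>
    hp.antitoneOn Set.self_mem_Ici hw hw

theorem measurable (hp : IsDecayingDensity p) : Measurable p := by
  classical
  have hpiecewise : (Set.Ici 0).piecewise p 0 = p := by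
    ext w
    by_cases hw : w ∈ Set.Ici (0 : ℝ)
    · rw [Set.piecewise_eq_of_mem _ _ _ hw]
    · rw [Set.piecewise_eq_of_notMem _ _ _ hw, Pi.zero_apply, hp.eq_zero_of_neg (not_le.1 hw)]
  exact hpiecewise ▸ hp.continuousOn.measurable_piecewise continuousOn_const measurableSet_Ici

theorem lintegral_eq_one (hp : IsDecayingDensity p) : ∫⁻ w, ENNReal.ofReal (p w) = 1 := by
  have hint : Integrable p := .of_integral_ne_zero (hp.integral_eq_one ▸ one_ne_zero)
  rw [← ofReal_integral_eq_lintegral_ofReal hint (.of_forall hp.nonneg), hp.integral_eq_one,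
    ENNReal.ofReal_one]

theorem logDeriv_nonpos (hp : IsDecayingDensity p) {w : ℝ} (hw : 0 < w) : logDeriv p w ≤ 0 := by
  have hderiv : deriv p w ≤ 0 := by
    rw [← derivWithin_of_mem_nhds (Ici_mem_nhds hw)]
    exact hp.antitoneOn.derivWithin_nonpos
  exact div_nonpos_of_nonpos_of_nonneg hderiv (hp.nonneg w)

theorem measurable_logDeriv (hp : IsDecayingDensity p) : Measurable (logDeriv p) :=
  (measurable_deriv p).div hp.measurable

end IsDecayingDensity

/-- The source term of the Volterra equation `n w = h w + ∫₀ʷ K(w, s) n s ds` solved by the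
density `n` in the deconvolution `p = (p 0 / q 0) • q + q ⋆ n`. -/
noncomputable def deconvSource (p q : ℝ → ℝ) (w : ℝ) : ℝ :=
  (logDeriv p w - logDeriv q w) * (p w / q 0)

/-- The kernel `K(w, s)` of the Volterra equation described at `deconvSource`. -/
noncomputable def deconvKernel (q : ℝ → ℝ) (w s : ℝ) : ℝ :=
  (logDeriv q w - logDeriv q (w - s)) * (q (w - s) / q 0)

section Deconvolution

variable {p q : ℝ → ℝ} {R : ℝ} {n : ℝ → ℝ≥0∞}

theorem measurable_deconvSource (hp : IsDecayingDensity p) (hq : IsDecayingDensity q) :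
    Measurable (deconvSource p q) :=
  (hp.measurable_logDeriv.sub hq.measurable_logDeriv).mul (hp.measurable.div_const _)

theorem measurable_deconvKernel (hq : IsDecayingDensity q) :
    Measurable (Function.uncurry (deconvKernel q)) := by
  have hsub : Measurable fun x : ℝ × ℝ => x.1 - x.2 := measurable_fst.sub measurable_snd
  exact ((hq.measurable_logDeriv.comp measurable_fst).sub (hq.measurable_logDeriv.comp hsub)).mul
    ((hq.measurable.comp hsub).div_const _)

theorem deconvKernel_nonneg (hq : IsDecayingDensity q)
    (hmono : MonotoneOn (logDeriv q) (Set.Ioi 0)) {w s : ℝ} (hs : s ∈ Set.Ioo 0 w) :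
    0 ≤ deconvKernel q w s :=
  mul_nonneg
    (sub_nonneg.2 (hmono (sub_pos.2 hs.2) (hs.1.trans hs.2) (sub_le_self w hs.1.le)))
    (div_nonneg (hq.nonneg _) (hq.nonneg 0))

theorem deconvSource_le (hp : IsDecayingDensity p) (hq : IsDecayingDensity q)
    (hR : ∀ w, 0 < w → -R ≤ logDeriv q w) {w : ℝ} (hw : 0 < w) :
    deconvSource p q w ≤ R * (p 0 / q 0) := by
  have hrate : logDeriv p w - logDeriv q w ≤ R := by linarith [hR w hw, hp.logDeriv_nonpos hw]
  have hR0 : 0 ≤ R := by linarith [hR w hw, hq.logDeriv_nonpos hw]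
  exact mul_le_mul hrate (div_le_div_of_nonneg_right (hp.le_apply_zero w) (hq.nonneg 0))
    (div_nonneg (hp.nonneg w) (hq.nonneg 0)) hR0

theorem deconvKernel_le (hq : IsDecayingDensity q) (hR : ∀ w, 0 < w → -R ≤ logDeriv q w)
    {w s : ℝ} (hs : s ∈ Set.Ioo 0 w) : deconvKernel q w s ≤ R := by
  have hw : 0 < w := hs.1.trans hs.2
  have hrate : logDeriv q w - logDeriv q (w - s) ≤ R := by
    linarith [hR _ (sub_pos.2 hs.2), hq.logDeriv_nonpos hw]
  have hR0 : 0 ≤ R := by linarith [hR w hw, hq.logDeriv_nonpos hw]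
  calc deconvKernel q w s ≤ R * 1 :=
        mul_le_mul hrate (div_le_one_of_le₀ (hq.le_apply_zero _) (hq.nonneg 0))
          (div_nonneg (hq.nonneg _) (hq.nonneg 0)) hR0
    _ = R := mul_one R

theorem lintegral_mul_exp_add_const {c w : ℝ} (hR : 0 ≤ R) (hc : 0 ≤ c) (hw : 0 ≤ w) :
    ENNReal.ofReal c + ∫⁻ s in Set.Ioo 0 w, ENNReal.ofReal (R * (c * Real.exp (R * s))) =
      ENNReal.ofReal (c * Real.exp (R * w)) := by
  have hderiv (s : ℝ) : HasDerivAt (fun s => c * Real.exp (R * s)) (R * (c * Real.exp (R * s))) s :=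
    (((hasDerivAt_id s).const_mul R).exp.const_mul c).congr_deriv (by simp only [id]; ring)
  rw [setLIntegral_Ioo_ofReal_of_hasDerivAt hw (by fun_prop) (fun s _ => hderiv s)
      (fun s _ => by positivity), ← ENNReal.ofReal_add hc]
  · simp
  · have : 1 ≤ Real.exp (R * w) := Real.one_le_exp (by positivity)
    rw [mul_zero, Real.exp_zero]
    nlinarith

theorem exists_kernel_lintegral_eq_setLIntegral_Ioo {K : ℝ → ℝ → ℝ≥0∞}
    (hK : Measurable (Function.uncurry K)) (a : ℝ) :
    ∃ κ : ProbabilityTheory.Kernel ℝ ℝ, ∀ w, ∀ g : ℝ → ℝ≥0∞, Measurable g →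
      ∫⁻ s, g s ∂κ w = ∫⁻ s in Set.Ioo a w, K w s * g s := by
  have hKa : Measurable (Function.uncurry fun w s => (Set.Ioo a w).indicator (K w) s) :=
    hK.indicator ((measurableSet_lt measurable_const measurable_snd).inter
      (measurableSet_lt measurable_snd measurable_fst))
  refine ⟨.withDensity (.const ℝ volume) fun w s => (Set.Ioo a w).indicator (K w) s,
    fun w g hg => ?_⟩
  rw [ProbabilityTheory.Kernel.lintegral_withDensity _ hKa w hg,
    ProbabilityTheory.Kernel.const_apply, ← lintegral_indicator measurableSet_Ioo]
  simp only [Set.indicator_mul_left]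

theorem exists_deconvDensity (hp : IsDecayingDensity p) (hq : IsDecayingDensity q)
    (hR : ∀ w, 0 < w → -R ≤ logDeriv q w) :
    ∃ n : ℝ → ℝ≥0∞, Measurable n ∧
      (∀ w, n w ≤ ENNReal.ofReal (R * (p 0 / q 0) * Real.exp (R * w))) ∧
      ∀ w, 0 < w → n w = ENNReal.ofReal (deconvSource p q w) +
        ∫⁻ s in Set.Ioo 0 w, ENNReal.ofReal (deconvKernel q w s) * n s := by
  have hR0 : 0 ≤ R := by linarith [hR 1 one_pos, hq.logDeriv_nonpos one_pos]
  have hc : 0 ≤ R * (p 0 / q 0) := mul_nonneg hR0 (div_nonneg (hp.nonneg 0) (hq.nonneg 0))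
  obtain ⟨κ, hκ⟩ :=
    exists_kernel_lintegral_eq_setLIntegral_Ioo
      (K := fun w s => ENNReal.ofReal (deconvKernel q w s))
      (measurable_deconvKernel hq).ennreal_ofReal 0
  let h := (Set.Ioi 0).indicator fun w => ENNReal.ofReal (deconvSource p q w)
  have hh : Measurable h :=
    (measurable_deconvSource hp hq).ennreal_ofReal.indicator measurableSet_Ioi
  have hpos {w : ℝ} (hw : 0 < w) : h w = ENNReal.ofReal (deconvSource p q w) :=
    Set.indicator_of_mem (Set.mem_Ioi.2 hw) _
  -- The exponential `E` is a supersolution, which keeps the iterates finite.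
  let E := fun w => ENNReal.ofReal (R * (p 0 / q 0) * Real.exp (R * w))
  obtain ⟨n, hn, hnE, hneq⟩ := exists_eq_add_lintegral_of_add_lintegral_le κ hh (E := E) fun w => by
    rw [hκ w E (by fun_prop)]
    rcases le_or_gt w 0 with hw | hw
    · simp [h, hw]
    calc h w + ∫⁻ s in Set.Ioo 0 w, ENNReal.ofReal (deconvKernel q w s) * E s
        ≤ ENNReal.ofReal (R * (p 0 / q 0)) + ∫⁻ s in Set.Ioo 0 w,
            ENNReal.ofReal (R * (R * (p 0 / q 0) * Real.exp (R * s))) := by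
          refine add_le_add ?_ (setLIntegral_mono' measurableSet_Ioo fun s hs => ?_)
          · rw [hpos hw]
            exact ENNReal.ofReal_le_ofReal (deconvSource_le hp hq hR hw)
          · rw [ENNReal.ofReal_mul hR0]
            exact mul_le_mul_left (ENNReal.ofReal_le_ofReal (deconvKernel_le hq hR hs)) _
      _ = E w := lintegral_mul_exp_add_const hR0 hc hw.le
  refine ⟨n, hn, hnE, fun w hw => ?_⟩
  rw [hneq, hκ w n hn, hpos hw]

theorem monotoneOn_div_of_logDeriv_le (hp : IsDecayingDensity p) (hq : IsDecayingDensity q)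
    (hpq : ∀ w, 0 < w → logDeriv q w ≤ logDeriv p w) :
    MonotoneOn (fun u => p u / q u) (Set.Ici 0) := by
  have hderiv {u : ℝ} (hu : 0 < u) :=
    hasDerivAt_div_of_logDeriv (hp.differentiableAt hu) (hq.differentiableAt hu) (hp.pos hu.le).ne'
      (hq.pos hu.le).ne'
  refine monotoneOn_of_deriv_nonneg (convex_Ici 0)
    (hp.continuousOn.div hq.continuousOn fun u hu => (hq.pos hu).ne')
    (fun u hu => ?_) fun u hu => ?_
  all_goals rw [interior_Ici] at hu
  · exact (hderiv hu).differentiableAt.differentiableWithinAt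
  · rw [(hderiv hu).deriv]
    exact mul_nonneg (sub_nonneg.2 (hpq u hu)) (div_nonneg (hp.nonneg u) (hq.nonneg u))

theorem lintegral_deconvSource (hp : IsDecayingDensity p) (hq : IsDecayingDensity q)
    (hpq : ∀ w, 0 < w → logDeriv q w ≤ logDeriv p w) {w : ℝ} (hw : 0 ≤ w) :
    ∫⁻ u in Set.Ioo 0 w, ENNReal.ofReal (q 0 / q u * deconvSource p q u) =
      ENNReal.ofReal (p w / q w - p 0 / q 0) := by
  have hne {u : ℝ} (hu : 0 ≤ u) : q u ≠ 0 := (hq.pos hu).ne'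
  have hsub : Set.Icc 0 w ⊆ Set.Ici 0 := Set.Icc_subset_Ici_self
  refine setLIntegral_Ioo_ofReal_of_hasDerivAt hw
    ((hp.continuousOn.mono hsub).div (hq.continuousOn.mono hsub) fun u hu => hne hu.1)
    (fun u hu => ?_) fun u hu => ?_
  · refine (hasDerivAt_div_of_logDeriv (hp.differentiableAt hu.1) (hq.differentiableAt hu.1)
      (hp.pos hu.1.le).ne' (hne hu.1.le)).congr_deriv ?_
    have := hne le_rfl
    rw [deconvSource]
    field_simp
  · exact mul_nonneg (div_nonneg (hq.nonneg 0) (hq.nonneg u))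
      (mul_nonneg (sub_nonneg.2 (hpq u hu.1)) (div_nonneg (hp.nonneg u) (hq.nonneg 0)))

theorem hasDerivAt_comp_sub_div (hq : IsDecayingDensity q) {s u : ℝ} (hs : 0 < s) (hsu : s < u) :
    HasDerivAt (fun u => q (u - s) / q u) (-(q 0 / q u * deconvKernel q u s)) u := by
  have hu : 0 < u := hs.trans hsu
  have hus : 0 < u - s := sub_pos.2 hsu
  have hne {v : ℝ} (hv : 0 ≤ v) : q v ≠ 0 := (hq.pos hv).ne'
  have hlog : logDeriv (fun u => q (u - s)) u = logDeriv q (u - s) := by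
    rw [logDeriv_apply, deriv_comp_sub_const, logDeriv_apply]
  refine (hasDerivAt_div_of_logDeriv (f := fun u => q (u - s))
    ((hq.differentiableAt hus).comp u (differentiableAt_id.sub_const s))
    (hq.differentiableAt hu) (hne hus.le) (hne hu.le)).congr_deriv ?_
  have := hne le_rfl
  rw [hlog, deconvKernel]
  field_simp
  ring

theorem continuousOn_comp_sub_div (hq : IsDecayingDensity q) {s : ℝ} (hs : 0 ≤ s) :
    ContinuousOn (fun u => q (u - s) / q u) (Set.Ici s) := by
  have hshift : ContinuousOn (fun u => q (u - s)) (Set.Ici s) :=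
    hq.continuousOn.comp (by fun_prop) fun u (hu : s ≤ u) => sub_nonneg.2 hu
  exact hshift.div (hq.continuousOn.mono (Set.Ici_subset_Ici.2 hs))
    fun u (hu : s ≤ u) => (hq.pos (hs.trans hu)).ne'

theorem antitoneOn_comp_sub_div (hq : IsDecayingDensity q)
    (hmono : MonotoneOn (logDeriv q) (Set.Ioi 0)) {s : ℝ} (hs : 0 < s) :
    AntitoneOn (fun u => q (u - s) / q u) (Set.Ici s) := by
  refine antitoneOn_of_deriv_nonpos (convex_Ici s) (continuousOn_comp_sub_div hq hs.le)
    (fun u hu => ?_) fun u hu => ?_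
  all_goals rw [interior_Ici] at hu
  · exact (hasDerivAt_comp_sub_div hq hs hu).differentiableAt.differentiableWithinAt
  · rw [(hasDerivAt_comp_sub_div hq hs hu).deriv]
    exact neg_nonpos.2 (mul_nonneg (div_nonneg (hq.nonneg 0) (hq.nonneg u))
      (deconvKernel_nonneg hq hmono ⟨hs, hu⟩))

theorem lintegral_deconvKernel (hq : IsDecayingDensity q)
    (hmono : MonotoneOn (logDeriv q) (Set.Ioi 0)) {s w : ℝ} (hs : s ∈ Set.Ioo 0 w) :
    ENNReal.ofReal (q (w - s) / q w) +
        ∫⁻ u in Set.Ioo s w, ENNReal.ofReal (q 0 / q u * deconvKernel q u s) =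
      ENNReal.ofReal (q 0 / q s) := by
  have hle : q (w - s) / q w ≤ q 0 / q s := by
    simpa using antitoneOn_comp_sub_div hq hmono hs.1 Set.self_mem_Ici hs.2.le hs.2.le
  rw [setLIntegral_Ioo_ofReal_of_hasDerivAt (F := fun u => -(q (u - s) / q u)) hs.2.le
    ((continuousOn_comp_sub_div hq hs.1.le).mono Set.Icc_subset_Ici_self).neg
    (fun u hu => (hasDerivAt_comp_sub_div hq hs.1 hu.1).neg.congr_deriv (neg_neg _))
    (fun u hu => mul_nonneg (div_nonneg (hq.nonneg 0) (hq.nonneg u))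
      (deconvKernel_nonneg hq hmono ⟨hs.1, hu.1⟩)), sub_self, neg_sub_neg,
    ← ENNReal.ofReal_add (div_nonneg (hq.nonneg _) (hq.nonneg w)) (sub_nonneg.2 hle),
    add_sub_cancel]

theorem setLIntegral_deconvDensity_ne_top (hq : IsDecayingDensity q) {E : ℝ → ℝ}
    (hE : Monotone E) (hnE : ∀ w, n w ≤ ENNReal.ofReal (E w)) {w : ℝ} (hw : 0 ≤ w) :
    ∫⁻ u in Set.Ioo 0 w, ENNReal.ofReal (q 0 / q u) * n u ≠ ∞ := by
  have hbound : ∀ u ∈ Set.Ioo 0 w, ENNReal.ofReal (q 0 / q u) * n u ≤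
      ENNReal.ofReal (q 0 / q w) * ENNReal.ofReal (E w) := fun u hu =>
    mul_le_mul' (ENNReal.ofReal_le_ofReal (div_le_div_of_nonneg_left (hq.nonneg 0) (hq.pos hw)
      (hq.antitoneOn hu.1.le hw hu.2.le))) ((hnE u).trans (ENNReal.ofReal_le_ofReal (hE hu.2.le)))
  refine ne_top_of_le_ne_top ?_ (setLIntegral_mono' measurableSet_Ioo hbound)
  rw [setLIntegral_const, Real.volume_Ioo]
  finiteness

theorem setLIntegral_mul_deconvDensity (hp : IsDecayingDensity p) (hq : IsDecayingDensity q)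
    (hpq : ∀ w, 0 < w → logDeriv q w ≤ logDeriv p w) (hn : Measurable n)
    (hvolterra : ∀ w, 0 < w → n w = ENNReal.ofReal (deconvSource p q w) +
      ∫⁻ s in Set.Ioo 0 w, ENNReal.ofReal (deconvKernel q w s) * n s) {w : ℝ} (hw : 0 ≤ w) :
    ∫⁻ u in Set.Ioo 0 w, ENNReal.ofReal (q 0 / q u) * n u =
      ENNReal.ofReal (p w / q w - p 0 / q 0) + ∫⁻ s in Set.Ioo 0 w,
        (∫⁻ u in Set.Ioo s w, ENNReal.ofReal (q 0 / q u * deconvKernel q u s)) * n s := by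
  let k (u s : ℝ) := q 0 / q u * deconvKernel q u s
  have hweight (u : ℝ) : 0 ≤ q 0 / q u := div_nonneg (hq.nonneg 0) (hq.nonneg u)
  have hweight_meas : Measurable fun u => q 0 / q u := hq.measurable.const_div _
  have hsource : Measurable fun u => ENNReal.ofReal (q 0 / q u * deconvSource p q u) :=
    (hweight_meas.mul (measurable_deconvSource hp hq)).ennreal_ofReal
  have hk : Measurable fun x : ℝ × ℝ => ENNReal.ofReal (k x.1 x.2) :=
    ((hweight_meas.comp measurable_fst).mul (measurable_deconvKernel hq)).ennreal_ofReal
  have hkn : Measurable (Function.uncurry fun u s => ENNReal.ofReal (k u s) * n s) :=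
    hk.mul (hn.comp measurable_snd)
  calc _ = ∫⁻ u in Set.Ioo 0 w, (ENNReal.ofReal (q 0 / q u * deconvSource p q u) +
          ∫⁻ s in Set.Ioo 0 u, ENNReal.ofReal (k u s) * n s) := by
        refine setLIntegral_congr_fun measurableSet_Ioo fun u hu => ?_
        simp only [k, hvolterra u hu.1, mul_add, ENNReal.ofReal_mul (hweight u), mul_assoc,
          lintegral_const_mul' _ _ ENNReal.ofReal_ne_top]
    _ = _ := by
        rw [lintegral_add_left hsource, lintegral_deconvSource hp hq hpq hw,
          lintegral_lintegral_Ioo_swap hkn]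
        congr 1
        refine lintegral_congr fun s => lintegral_mul_const _ ?_
        exact hk.comp measurable_prodMk_right

theorem setLIntegral_comp_sub_mul_deconvDensity (hp : IsDecayingDensity p)
    (hq : IsDecayingDensity q) (hmono : MonotoneOn (logDeriv q) (Set.Ioi 0))
    (hpq : ∀ w, 0 < w → logDeriv q w ≤ logDeriv p w) (hn : Measurable n) {E : ℝ → ℝ}
    (hE : Monotone E) (hnE : ∀ w, n w ≤ ENNReal.ofReal (E w))
    (hvolterra : ∀ w, 0 < w → n w = ENNReal.ofReal (deconvSource p q w) +
      ∫⁻ s in Set.Ioo 0 w, ENNReal.ofReal (deconvKernel q w s) * n s) {w : ℝ} (hw : 0 ≤ w) :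
    ∫⁻ s in Set.Ioo 0 w, ENNReal.ofReal (q (w - s)) * n s =
      ENNReal.ofReal (p w - p 0 / q 0 * q w) := by
  have hqw : 0 < q w := hq.pos hw
  have hA := setLIntegral_mul_deconvDensity hp hq hpq hn hvolterra hw
  have hfin := setLIntegral_deconvDensity_ne_top hq hE hnE hw
  -- `J` is a common term of the two expressions `hA` and `hMJ` for the same weighted integral of
  -- `n`; in `ℝ≥0∞` it cancels only because the bound `hnE` makes it finite.
  set J := ∫⁻ s in Set.Ioo 0 w,
    (∫⁻ u in Set.Ioo s w, ENNReal.ofReal (q 0 / q u * deconvKernel q u s)) * n s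
  have hshift : Measurable fun s => ENNReal.ofReal (q (w - s) / q w) * n s :=
    ((hq.measurable.comp (measurable_const.sub measurable_id)).div_const _).ennreal_ofReal.mul hn
  have hMJ : (∫⁻ s in Set.Ioo 0 w, ENNReal.ofReal (q (w - s) / q w) * n s) + J =
      ∫⁻ u in Set.Ioo 0 w, ENNReal.ofReal (q 0 / q u) * n u := by
    rw [← lintegral_add_left hshift]
    refine setLIntegral_congr_fun measurableSet_Ioo fun s hs => ?_
    simp only [← add_mul, lintegral_deconvKernel hq hmono hs]
  have hJ : J ≠ ∞ := fun hJ => hfin (by rw [hA, hJ, add_top])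
  have hM := (ENNReal.add_left_inj hJ).1 (hMJ.trans hA)
  calc _ = ENNReal.ofReal (q w) *
        ∫⁻ s in Set.Ioo 0 w, ENNReal.ofReal (q (w - s) / q w) * n s := by
        simp only [← lintegral_const_mul' _ _ ENNReal.ofReal_ne_top, ← mul_assoc,
          ← ENNReal.ofReal_mul hqw.le, mul_div_cancel₀ _ hqw.ne']
    _ = _ := by
        rw [hM, ← ENNReal.ofReal_mul hqw.le]
        congr 1
        field_simp

theorem isProbabilityMeasure_of_lintegral_sub_eq {p q : ℝ → ℝ≥0∞} {ν : Measure ℝ} [SFinite ν]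
    (hq : Measurable q) (hp1 : ∫⁻ w, p w = 1) (hq1 : ∫⁻ w, q w = 1)
    (hconv : ∀ w, ∫⁻ s, q (w - s) ∂ν = p w) : IsProbabilityMeasure ν := by
  have hmeas : Measurable (Function.uncurry fun w s => q (w - s)) :=
    hq.comp (measurable_fst.sub measurable_snd)
  constructor
  calc ν Set.univ = ∫⁻ s, (∫⁻ w, q (w - s)) ∂ν := by
        simp only [lintegral_sub_right_eq_self q, hq1, lintegral_one]
    _ = ∫⁻ w, ∫⁻ s, q (w - s) ∂ν := (lintegral_lintegral_swap hmeas.aemeasurable).symm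
    _ = 1 := by simp only [hconv, hp1]

theorem lintegral_sub_smul_dirac_add_withDensity (hq : IsDecayingDensity q) (hn : Measurable n)
    (c : ℝ≥0∞) (w : ℝ) :
    ∫⁻ s, ENNReal.ofReal (q (w - s))
        ∂(c • Measure.dirac 0 + (volume.restrict (Set.Ioi 0)).withDensity n) =
      c * ENNReal.ofReal (q w) + ∫⁻ s in Set.Ioo 0 w, ENNReal.ofReal (q (w - s)) * n s := by
  have hshift : Measurable fun s => ENNReal.ofReal (q (w - s)) :=
    (hq.measurable.comp (measurable_const.sub measurable_id)).ennreal_ofReal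
  have hsupport : ∀ s ∉ Set.Iic w, ENNReal.ofReal (q (w - s)) * n s = 0 := fun s hs => by
    rw [hq.eq_zero_of_neg (sub_neg.2 (not_le.1 hs)), ENNReal.ofReal_zero, zero_mul]
  rw [lintegral_add_measure, lintegral_smul_measure, lintegral_dirac' 0 hshift, sub_zero,
    smul_eq_mul, lintegral_withDensity_eq_lintegral_mul _ hn hshift,
    setLIntegral_congr Ioo_ae_eq_Ioc, ← Set.Iic_inter_Ioi,
    ← setLIntegral_indicator measurableSet_Iic,
    Set.indicator_eq_self.2 (Function.support_subset_iff'.2 hsupport)]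
  simp only [Pi.mul_apply, mul_comm]

theorem exists_isProbabilityMeasure_eq_integral_sub (hp : IsDecayingDensity p)
    (hq : IsDecayingDensity q) (hmono : MonotoneOn (logDeriv q) (Set.Ioi 0))
    (hbdd : BddBelow (logDeriv q '' Set.Ioi 0))
    (hpq : ∀ w, 0 < w → logDeriv q w ≤ logDeriv p w) :
    ∃ ν : Measure ℝ, IsProbabilityMeasure ν ∧ ∀ w, p w = ∫ s, q (w - s) ∂ν := by
  obtain ⟨L, hL⟩ := hbdd
  have hR : ∀ w, 0 < w → -(-L) ≤ logDeriv q w := fun w hw =>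
    (neg_neg L).symm ▸ hL (Set.mem_image_of_mem _ hw)
  have hR0 : 0 ≤ -L := by linarith [hR 1 one_pos, hq.logDeriv_nonpos one_pos]
  have hc : 0 ≤ p 0 / q 0 := div_nonneg (hp.nonneg 0) (hq.nonneg 0)
  obtain ⟨n, hn, hnE, hvolterra⟩ := exists_deconvDensity hp hq hR
  have hE : Monotone fun w => -L * (p 0 / q 0) * Real.exp (-L * w) := fun v w hvw =>
    mul_le_mul_of_nonneg_left (Real.exp_le_exp.2 (mul_le_mul_of_nonneg_left hvw hR0))
      (mul_nonneg hR0 hc)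
  let ν : Measure ℝ := ENNReal.ofReal (p 0 / q 0) • Measure.dirac 0 +
    (volume.restrict (Set.Ioi 0)).withDensity n
  have hconv (w : ℝ) : ∫⁻ s, ENNReal.ofReal (q (w - s)) ∂ν = ENNReal.ofReal (p w) := by
    rw [lintegral_sub_smul_dirac_add_withDensity hq hn]
    rcases lt_or_ge w 0 with hw | hw
    · simp [hp.eq_zero_of_neg hw, hq.eq_zero_of_neg hw, Set.Ioo_eq_empty_of_le hw.le]
    have hle : p 0 / q 0 * q w ≤ p w :=
      (le_div_iff₀ (hq.pos hw)).1 (monotoneOn_div_of_logDeriv_le hp hq hpq Set.self_mem_Ici hw hw)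
    rw [setLIntegral_comp_sub_mul_deconvDensity hp hq hmono hpq hn hE hnE hvolterra hw,
      ← ENNReal.ofReal_mul hc, ← ENNReal.ofReal_add (mul_nonneg hc (hq.nonneg w))
        (sub_nonneg.2 hle), add_sub_cancel]
  refine ⟨ν, isProbabilityMeasure_of_lintegral_sub_eq hq.measurable.ennreal_ofReal
    hp.lintegral_eq_one hq.lintegral_eq_one hconv, fun w => ?_⟩
  rw [integral_eq_lintegral_of_nonneg_ae (.of_forall fun s => hq.nonneg (w - s))
    (hq.measurable.comp (measurable_const.sub measurable_id)).aestronglyMeasurable, hconv,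
    ENNReal.toReal_ofReal (hp.nonneg w)]

end Deconvolution

/-! ### Jensen's inequality with a weight -/

theorem exists_affine_le_of_convexOn {s : Set ℝ} {φ : ℝ → ℝ} (hφ : ConvexOn ℝ s φ) {x : ℝ}
    (hx : x ∈ interior s) : ∃ c, ∀ y ∈ s, φ x + c * (y - x) ≤ φ y := by
  refine ⟨derivWithin φ (Set.Ioi x) x, fun y hy => ?_⟩
  rcases lt_trichotomy x y with hxy | rfl | hyx
  · have hslope := hφ.rightDeriv_le_slope_of_mem_interior hx hy hxy
    rw [slope_def_field, le_div_iff₀ (sub_pos.2 hxy)] at hslope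
    linarith
  · simp
  · have hslope := (hφ.slope_le_leftDeriv_of_mem_interior hy hx hyx).trans
      (hφ.leftDeriv_le_rightDeriv_of_mem_interior hx)
    rw [slope_def_field, div_le_iff₀ (sub_pos.2 hyx)] at hslope
    linarith

theorem convexOn_mul_integral_le_integral_mul {α : Type*} [MeasurableSpace α] {μ : Measure α}
    {s : Set ℝ} {φ : ℝ → ℝ} {m w : α → ℝ} {M : ℝ} (hφ : ConvexOn ℝ s φ) (hm : ∀ x, m x ∈ s)
    (hM : M ∈ interior s) (hw : ∀ x, 0 ≤ w x) (hw_int : Integrable w μ)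
    (hmw_int : Integrable (fun x => m x * w x) μ)
    (hφw_int : Integrable (fun x => φ (m x) * w x) μ)
    (hmean : M * ∫ x, w x ∂μ = ∫ x, m x * w x ∂μ) :
    φ M * ∫ x, w x ∂μ ≤ ∫ x, φ (m x) * w x ∂μ := by
  obtain ⟨c, hc⟩ := exists_affine_le_of_convexOn hφ hM
  calc φ M * ∫ x, w x ∂μ
      = ∫ x, ((φ M - c * M) * w x + c * (m x * w x)) ∂μ := by
        rw [integral_add (hw_int.const_mul _) (hmw_int.const_mul _), integral_const_mul,
          integral_const_mul, ← hmean]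
        ring
    _ ≤ ∫ x, φ (m x) * w x ∂μ := by
        refine integral_mono ((hw_int.const_mul _).add (hmw_int.const_mul _)) hφw_int fun x => ?_
        linarith [mul_le_mul_of_nonneg_right (hc (m x) (hm x)) (hw x)]

/-! ### Posterior moments -/

/-- A bounded, everywhere nonnegative and Borel measurable version of a probability density on
`ℝ`; boundedness makes `nrmA p f ys` a convergent integral for every integrable `f`. -/
structure IsBoundedDensity (p : ℝ → ℝ) : Prop where
  measurable : Measurable p
  nonneg : ∀ w, 0 ≤ p w
  exists_le : ∃ C, ∀ w, p w ≤ C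
  integral_eq_one : ∫ w, p w = 1

theorem IsDecayingDensity.isBoundedDensity {p : ℝ → ℝ} (hp : IsDecayingDensity p) :
    IsBoundedDensity p :=
  ⟨hp.measurable, hp.nonneg, ⟨p 0, hp.le_apply_zero⟩, hp.integral_eq_one⟩

section Posterior

variable {p π₀ f : ℝ → ℝ} {k : ℕ}

theorem measurable_prod_sub (hp : IsBoundedDensity p) :
    Measurable fun x : (Fin k → ℝ) × ℝ => ∏ t, p (x.1 t - x.2) :=
  Finset.measurable_prod _ fun t _ => hp.measurable.comp (by fun_prop)

theorem prod_sub_nonneg (hp : IsBoundedDensity p) (ys : Fin k → ℝ) (x : ℝ) :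
    0 ≤ ∏ t, p (ys t - x) :=
  Finset.prod_nonneg fun _ _ => hp.nonneg _

theorem exists_norm_prod_sub_le (hp : IsBoundedDensity p) (k : ℕ) :
    ∃ C, ∀ (ys : Fin k → ℝ) (x : ℝ), ‖∏ t, p (ys t - x)‖ ≤ C := by
  obtain ⟨C, hC⟩ := hp.exists_le
  refine ⟨C ^ k, fun ys x => ?_⟩
  rw [Real.norm_of_nonneg (prod_sub_nonneg hp ys x)]
  exact (Finset.prod_le_prod (fun _ _ => hp.nonneg _) fun _ _ => hC _).trans_eq (by simp)

theorem integrable_mul_prod_sub (hp : IsBoundedDensity p) (hf : Integrable f) (ys : Fin k → ℝ) :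
    Integrable fun x => f x * ∏ t, p (ys t - x) := by
  obtain ⟨C, hC⟩ := exists_norm_prod_sub_le hp k
  exact hf.mul_bdd ((measurable_prod_sub hp).comp measurable_prodMk_left).aestronglyMeasurable
    (.of_forall (hC ys))

theorem nrmA_nonneg (hp : IsBoundedDensity p) (hf : ∀ x, 0 ≤ f x) (ys : Fin k → ℝ) :
    0 ≤ nrmA p f ys :=
  integral_nonneg fun x => mul_nonneg (hf x) (prod_sub_nonneg hp ys x)

theorem integral_prod_sub (hp : IsBoundedDensity p) (k : ℕ) (x : ℝ) :
    ∫ ys : Fin k → ℝ, ∏ t, p (ys t - x) = 1 := by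
  rw [integral_fintype_prod_volume_eq_prod fun (_ : Fin k) y => p (y - x)]
  exact Finset.prod_eq_one fun _ _ => (integral_sub_right_eq_self p x).trans hp.integral_eq_one

theorem integrable_prod_mul_prod_sub (hp : IsBoundedDensity p) (hf : Integrable f) :
    Integrable (Function.uncurry fun (ys : Fin k → ℝ) x => f x * ∏ t, p (ys t - x))
      (volume.prod volume) := by
  have hmeas : AEStronglyMeasurable
      (Function.uncurry fun (ys : Fin k → ℝ) x => f x * ∏ t, p (ys t - x)) (volume.prod volume) :=
    hf.aestronglyMeasurable.comp_snd.mul (measurable_prod_sub hp).aestronglyMeasurable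
  refine (integrable_prod_iff' hmeas).2
    ⟨.of_forall fun x => ?_, hf.norm.congr (.of_forall fun x => ?_)⟩
  · exact (Integrable.of_integral_ne_zero (integral_prod_sub hp k x ▸ one_ne_zero)).const_mul (f x)
  · simp only [Function.uncurry, norm_mul, Real.norm_of_nonneg (prod_sub_nonneg hp _ x),
      integral_const_mul, integral_prod_sub hp, mul_one]

theorem integrable_nrmA (hp : IsBoundedDensity p) (hf : Integrable f) :
    Integrable fun ys : Fin k → ℝ => nrmA p f ys :=
  (integrable_prod_mul_prod_sub hp hf).integral_prod_left

theorem integral_nrmA (hp : IsBoundedDensity p) (hf : Integrable f) :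
    ∫ ys : Fin k → ℝ, nrmA p f ys = ∫ x, f x := by
  unfold nrmA
  simp only [integral_integral_swap (integrable_prod_mul_prod_sub hp hf), integral_const_mul,
    integral_prod_sub hp, mul_one]

theorem cmeanA_mul_nrmA (hp : IsBoundedDensity p) (hπ : ∀ x, 0 ≤ π₀ x) (hπ_int : Integrable π₀)
    (ys : Fin k → ℝ) :
    cmeanA p π₀ ys * nrmA p π₀ ys = nrmA p (fun x => x * π₀ x) ys := by
  simp only [nrmA, mul_assoc]
  refine div_mul_cancel_of_imp fun hσ => integral_eq_zero_of_ae ?_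
  have hzero := (integral_eq_zero_iff_of_nonneg
    (fun x => mul_nonneg (hπ x) (prod_sub_nonneg hp ys x))
    (integrable_mul_prod_sub hp hπ_int ys)).1 hσ
  filter_upwards [hzero] with x hx
  rw [hx, Pi.zero_apply, mul_zero]

theorem integrable_mul_of_integrable_sq_mul (hπ_int : Integrable π₀)
    (hπ2 : Integrable fun x => x ^ 2 * π₀ x) : Integrable fun x => x * π₀ x := by
  refine (hπ_int.norm.add hπ2.norm).mono'
    (measurable_id.aestronglyMeasurable.mul hπ_int.aestronglyMeasurable) (.of_forall fun x => ?_)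
  have hle : |x| ≤ 1 + x ^ 2 := by nlinarith [sq_abs x, sq_nonneg (|x| - 1)]
  simpa [add_mul] using mul_le_mul_of_nonneg_right hle (abs_nonneg (π₀ x))

theorem integral_sub_cmeanA_sq_mul (hp : IsBoundedDensity p) (hπ : ∀ x, 0 ≤ π₀ x)
    (hπ_int : Integrable π₀) (hπ2 : Integrable fun x => x ^ 2 * π₀ x) (ys : Fin k → ℝ) :
    ∫ x, (x - cmeanA p π₀ ys) ^ 2 * (π₀ x * ∏ t, p (ys t - x)) =
      nrmA p (fun x => x ^ 2 * π₀ x) ys - cmeanA p π₀ ys ^ 2 * nrmA p π₀ ys := by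
  have hmean := cmeanA_mul_nrmA hp hπ hπ_int ys
  set m := cmeanA p π₀ ys
  have hint0 := (integrable_mul_prod_sub hp hπ_int ys).const_mul (m ^ 2)
  have hint1 := (integrable_mul_prod_sub hp
    (integrable_mul_of_integrable_sq_mul hπ_int hπ2) ys).const_mul (2 * m)
  have hint2 := integrable_mul_prod_sub hp hπ2 ys
  calc _ = ∫ x, (x ^ 2 * π₀ x * ∏ t, p (ys t - x) - 2 * m * (x * π₀ x * ∏ t, p (ys t - x)) +
        m ^ 2 * (π₀ x * ∏ t, p (ys t - x))) := by congr with x; ring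
    _ = nrmA p (fun x => x ^ 2 * π₀ x) ys - 2 * m * nrmA p (fun x => x * π₀ x) ys +
        m ^ 2 * nrmA p π₀ ys := by
      rw [integral_add (by exact hint2.sub hint1) hint0, integral_sub hint2 hint1,
        integral_const_mul, integral_const_mul]
      rfl
    _ = _ := by rw [← hmean]; ring

theorem integrable_cmeanA_sq_mul_nrmA (hp : IsBoundedDensity p) (hπ : ∀ x, 0 ≤ π₀ x)
    (hπ_int : Integrable π₀) (hπ2 : Integrable fun x => x ^ 2 * π₀ x) :
    Integrable fun ys : Fin k → ℝ => cmeanA p π₀ ys ^ 2 * nrmA p π₀ ys := by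
  have hσ := (integrable_nrmA (k := k) hp hπ_int).aemeasurable
  have hmean := (integrable_nrmA (k := k) hp
    (integrable_mul_of_integrable_sq_mul hπ_int hπ2)).aemeasurable
  have hmeas : AEMeasurable fun ys : Fin k → ℝ => cmeanA p π₀ ys := by
    refine (hmean.div hσ).congr (.of_forall fun ys => ?_)
    simp only [Pi.div_apply, cmeanA, nrmA, mul_assoc]
  refine (integrable_nrmA hp hπ2).mono' ((hmeas.pow_const 2).mul hσ).aestronglyMeasurable
    (.of_forall fun ys => ?_)
  rw [Real.norm_of_nonneg (mul_nonneg (sq_nonneg _) (nrmA_nonneg hp hπ ys)), ← sub_nonneg,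
    ← integral_sub_cmeanA_sq_mul hp hπ hπ_int hπ2]
  exact integral_nonneg fun x => mul_nonneg (sq_nonneg _)
    (mul_nonneg (hπ x) (prod_sub_nonneg hp ys x))

theorem mseA_eq_sub (hp : IsBoundedDensity p) (hπ : ∀ x, 0 ≤ π₀ x) (hπ_int : Integrable π₀)
    (hπ2 : Integrable fun x => x ^ 2 * π₀ x) (k : ℕ) :
    mseA p π₀ k = (∫ x, x ^ 2 * π₀ x) -
      ∫ ys : Fin k → ℝ, cmeanA p π₀ ys ^ 2 * nrmA p π₀ ys := by
  simp only [mseA, integral_sub_cmeanA_sq_mul hp hπ hπ_int hπ2]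
  rw [integral_sub (integrable_nrmA hp hπ2) (integrable_cmeanA_sq_mul_nrmA hp hπ hπ_int hπ2),
    integral_nrmA hp hπ2]

end Posterior

/-! ### Garbling -/

theorem integrable_prod_comp_sub {G E : Type*} [AddGroup G] [MeasurableSpace G] [MeasurableAdd₂ G]
    [MeasurableNeg G] [NormedAddCommGroup E] [NormedSpace ℝ E] {μ P : Measure G}
    [SFinite μ] [μ.IsAddRightInvariant] [IsFiniteMeasure P] {g : G → E} (hg : Integrable g μ) :
    Integrable (Function.uncurry fun y s => g (y - s)) (μ.prod P) := by
  have hone : Integrable (fun _ : G => (1 : ℝ)) P := integrable_const 1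
  simpa only [ContinuousLinearMap.lsmul_apply, one_smul] using!
    hone.convolution_integrand (ContinuousLinearMap.lsmul ℝ ℝ) hg

theorem integral_integral_comp_sub {G E : Type*} [AddGroup G] [MeasurableSpace G]
    [MeasurableAdd₂ G] [MeasurableNeg G] [NormedAddCommGroup E] [NormedSpace ℝ E]
    [CompleteSpace E] {μ P : Measure G} [SFinite μ] [μ.IsAddRightInvariant]
    [IsProbabilityMeasure P] {g : G → E} (hg : Integrable g μ) :
    ∫ y, ∫ s, g (y - s) ∂P ∂μ = ∫ y, g y ∂μ := by
  rw [integral_integral_swap (integrable_prod_comp_sub hg)]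
  simp only [integral_sub_right_eq_self g, integral_const, probReal_univ, one_smul]

section Garbling

variable {p q π₀ f : ℝ → ℝ} {k : ℕ} {ν : Measure ℝ} [IsProbabilityMeasure ν]

theorem integrable_prod_mul_prod_sub_sub (hq : IsBoundedDensity q) (hf : Integrable f)
    (ys : Fin k → ℝ) :
    Integrable (Function.uncurry fun (x : ℝ) (s : Fin k → ℝ) => f x * ∏ t, q ((ys - s) t - x))
      (volume.prod (Measure.pi fun _ => ν)) := by
  obtain ⟨C, hC⟩ := exists_norm_prod_sub_le hq k
  have hshift : Measurable fun z : ℝ × (Fin k → ℝ) => (ys - z.2, z.1) := by fun_prop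
  exact (hf.comp_fst _).mul_bdd ((measurable_prod_sub hq).comp hshift).aestronglyMeasurable
    (.of_forall fun z => hC (ys - z.2) z.1)

theorem integrable_nrmA_sub (hq : IsBoundedDensity q) (hf : Integrable f) (ys : Fin k → ℝ) :
    Integrable (fun s => nrmA q f (ys - s)) (Measure.pi fun _ => ν) :=
  (integrable_prod_mul_prod_sub_sub hq hf ys).integral_prod_right

theorem nrmA_eq_integral_nrmA_sub (hq : IsBoundedDensity q)
    (hν : ∀ w, p w = ∫ s, q (w - s) ∂ν) (hf : Integrable f) (ys : Fin k → ℝ) :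
    nrmA p f ys = ∫ s, nrmA q f (ys - s) ∂Measure.pi fun _ => ν := by
  have hprod (x : ℝ) :
      ∏ t, p (ys t - x) = ∫ s : Fin k → ℝ, ∏ t, q ((ys - s) t - x) ∂Measure.pi fun _ => ν := by
    simp only [hν, Pi.sub_apply, sub_right_comm]
    exact (integral_fintype_prod_eq_prod fun t s => q (ys t - x - s)).symm
  simp only [nrmA, hprod, ← integral_const_mul]
  exact integral_integral_swap (integrable_prod_mul_prod_sub_sub hq hf ys)

theorem integral_comp_cmeanA_mul_nrmA_le (hp : IsBoundedDensity p) (hq : IsBoundedDensity q)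
    (hν : ∀ w, p w = ∫ s, q (w - s) ∂ν) (hπ : ∀ x, 0 ≤ π₀ x) (hπ_int : Integrable π₀)
    (hπ1 : Integrable fun x => x * π₀ x) {φ : ℝ → ℝ} (hφ : ConvexOn ℝ Set.univ φ)
    (hφp : Integrable fun ys : Fin k → ℝ => φ (cmeanA p π₀ ys) * nrmA p π₀ ys)
    (hφq : Integrable fun ys : Fin k → ℝ => φ (cmeanA q π₀ ys) * nrmA q π₀ ys) :
    ∫ ys : Fin k → ℝ, φ (cmeanA p π₀ ys) * nrmA p π₀ ys ≤
      ∫ ys : Fin k → ℝ, φ (cmeanA q π₀ ys) * nrmA q π₀ ys := by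
  let P : Measure (Fin k → ℝ) := Measure.pi fun _ => ν
  have hφq_prod := integrable_prod_comp_sub (P := P) hφq
  rw [← integral_integral_comp_sub (P := P) hφq]
  refine integral_mono_ae hφp hφq_prod.integral_prod_left ?_
  filter_upwards [hφq_prod.prod_right_ae] with ys hys
  have hσ := nrmA_eq_integral_nrmA_sub hq hν hπ_int ys
  have hmean : cmeanA p π₀ ys * nrmA p π₀ ys =
      ∫ s, cmeanA q π₀ (ys - s) * nrmA q π₀ (ys - s) ∂P := by
    simp only [cmeanA_mul_nrmA hp hπ hπ_int, cmeanA_mul_nrmA hq hπ hπ_int,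
      nrmA_eq_integral_nrmA_sub hq hν hπ1 ys, P]
  have hmean_int : Integrable (fun s => cmeanA q π₀ (ys - s) * nrmA q π₀ (ys - s)) P := by
    simpa only [cmeanA_mul_nrmA hq hπ hπ_int] using integrable_nrmA_sub hq hπ1 ys
  rw [hσ] at hmean ⊢
  exact convexOn_mul_integral_le_integral_mul hφ (fun _ => Set.mem_univ _)
    (by rw [interior_univ]; exact Set.mem_univ _) (fun s => nrmA_nonneg hq hπ (ys - s))
    (integrable_nrmA_sub hq hπ_int ys) hmean_int hys hmean

theorem mseA_le_mseA (hp : IsBoundedDensity p) (hq : IsBoundedDensity q)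
    (hν : ∀ w, p w = ∫ s, q (w - s) ∂ν) (hπ : ∀ x, 0 ≤ π₀ x) (hπ_int : Integrable π₀)
    (hπ2 : Integrable fun x => x ^ 2 * π₀ x) (k : ℕ) : mseA q π₀ k ≤ mseA p π₀ k := by
  rw [mseA_eq_sub hp hπ hπ_int hπ2, mseA_eq_sub hq hπ hπ_int hπ2]
  have hsq : ConvexOn ℝ Set.univ fun x : ℝ => x ^ 2 := even_two.convexOn_pow
  exact sub_le_sub_left (integral_comp_cmeanA_mul_nrmA_le hp hq hν hπ hπ_int
    (integrable_mul_of_integrable_sq_mul hπ_int hπ2) hsq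
    (integrable_cmeanA_sq_mul_nrmA hp hπ hπ_int hπ2)
    (integrable_cmeanA_sq_mul_nrmA hq hπ hπ_int hπ2)) _

end Garbling

theorem stmt_11_general {p q π₀ : ℝ → ℝ} (hp : IsDecayingDensity p) (hq : IsDecayingDensity q)
    (hmono : MonotoneOn (logDeriv q) (Set.Ioi 0)) (hbdd : BddBelow (logDeriv q '' Set.Ioi 0))
    (hpq : ∀ w, 0 < w → logDeriv q w ≤ logDeriv p w) (hπ : ∀ x, 0 ≤ π₀ x)
    (hπ_int : Integrable π₀) (hπ2 : Integrable fun x => x ^ 2 * π₀ x) (k : ℕ) :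
    (∀ φ : ℝ → ℝ, ConvexOn ℝ Set.univ φ →
      Integrable (fun ys : Fin k → ℝ => φ (cmeanA p π₀ ys) * nrmA p π₀ ys) →
      Integrable (fun ys : Fin k → ℝ => φ (cmeanA q π₀ ys) * nrmA q π₀ ys) →
      (∫ ys : Fin k → ℝ, φ (cmeanA p π₀ ys) * nrmA p π₀ ys) ≤
        ∫ ys : Fin k → ℝ, φ (cmeanA q π₀ ys) * nrmA q π₀ ys) ∧
    mseA q π₀ k ≤ mseA p π₀ k := by
  obtain ⟨ν, _, hν⟩ := exists_isProbabilityMeasure_eq_integral_sub hp hq hmono hbdd hpq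
  have hp' := hp.isBoundedDensity
  have hq' := hq.isBoundedDensity
  have hπ1 := integrable_mul_of_integrable_sq_mul hπ_int hπ2
  exact ⟨fun φ hφ => integral_comp_cmeanA_mul_nrmA_le hp' hq' hν hπ hπ_int hπ1 hφ,
    mseA_le_mseA hp' hq' hν hπ hπ_int hπ2 k⟩

/-! ### Power laws -/

section PowerLaw

variable {a b : ℝ}

theorem powerDens_of_nonneg (a : ℝ) {w : ℝ} (hw : 0 ≤ w) :
    powerDens a w = (a - 1) * (1 + w) ^ (-a) :=
  if_pos hw

theorem integral_powerDens (ha : 1 < a) : ∫ w, powerDens a w = 1 := by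
  have hindicator : powerDens a = (Set.Ici 0).indicator fun w => (a - 1) * (1 + w) ^ (-a) := by
    ext w
    simp only [powerDens, Set.indicator_apply, Set.mem_Ici]
  have hpreimage : (fun w : ℝ => 1 + w) ⁻¹' Set.Ioi 1 = Set.Ioi 0 := by
    ext; simp
  rw [hindicator, integral_indicator measurableSet_Ici, integral_Ici_eq_integral_Ioi, ← hpreimage,
    (measurePreserving_add_left volume (1 : ℝ)).setIntegral_preimage_emb
      (measurableEmbedding_addLeft 1) (fun w => (a - 1) * w ^ (-a)),
    integral_const_mul, integral_Ioi_rpow_of_lt (neg_lt_neg ha) one_pos, Real.one_rpow]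
  have := (sub_pos.2 ha).ne'
  grind

theorem hasDerivAt_powerDens (a : ℝ) {w : ℝ} (hw : 0 < w) :
    HasDerivAt (powerDens a) (-a / (1 + w) * powerDens a w) w := by
  have hw1 : 0 < 1 + w := by positivity
  have hpow :=
    (((hasDerivAt_id w).const_add 1).rpow_const (p := -a) (.inl hw1.ne')).const_mul (a - 1)
  refine (hpow.congr_of_eventuallyEq ?_).congr_deriv ?_
  · filter_upwards [Ioi_mem_nhds hw] with u hu using powerDens_of_nonneg a (le_of_lt hu)
  · rw [powerDens_of_nonneg a hw.le, id, Real.rpow_sub_one hw1.ne']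
    ring

theorem isDecayingDensity_powerDens (ha : 1 < a) : IsDecayingDensity (powerDens a) where
  eq_zero_of_neg w hw := if_neg hw.not_ge
  pos w hw := by
    rw [powerDens_of_nonneg a hw]
    exact mul_pos (sub_pos.2 ha) (by positivity)
  antitoneOn v hv w hw hvw := by
    rw [powerDens_of_nonneg a hv, powerDens_of_nonneg a hw]
    rw [Set.mem_Ici] at hv
    exact mul_le_mul_of_nonneg_left
      (Real.rpow_le_rpow_of_nonpos (by positivity) (by linarith) (by linarith)) (by linarith)
  continuousOn := by
    have hpow : ContinuousOn (fun w : ℝ => (a - 1) * (1 + w) ^ (-a)) (Set.Ici 0) :=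
      .mul continuousOn_const (.rpow_const (by fun_prop) fun w hw => .inl (by grind))
    exact hpow.congr fun w hw => powerDens_of_nonneg a hw
  differentiableAt w hw := (hasDerivAt_powerDens a hw).differentiableAt
  integral_eq_one := integral_powerDens ha

theorem logDeriv_powerDens (ha : 1 < a) {w : ℝ} (hw : 0 < w) :
    logDeriv (powerDens a) w = -a / (1 + w) := by
  rw [logDeriv_apply, (hasDerivAt_powerDens a hw).deriv,
    mul_div_cancel_right₀ _ ((isDecayingDensity_powerDens ha).pos hw.le).ne']

theorem monotoneOn_logDeriv_powerDens (ha : 1 < a) :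
    MonotoneOn (logDeriv (powerDens a)) (Set.Ioi 0) := fun v hv w hw hvw => by
  rw [logDeriv_powerDens ha hv, logDeriv_powerDens ha hw, neg_div, neg_div, neg_le_neg_iff]
  rw [Set.mem_Ioi] at hv
  gcongr

theorem bddBelow_logDeriv_powerDens (ha : 1 < a) :
    BddBelow (logDeriv (powerDens a) '' Set.Ioi 0) := by
  refine ⟨-a, Set.forall_mem_image.2 fun w hw => ?_⟩
  rw [Set.mem_Ioi] at hw
  rw [logDeriv_powerDens ha hw, neg_div, neg_le_neg_iff]
  exact div_le_self (by linarith) (by linarith)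

theorem logDeriv_powerDens_le (ha : 1 < a) (hab : a ≤ b) {w : ℝ} (hw : 0 < w) :
    logDeriv (powerDens b) w ≤ logDeriv (powerDens a) w := by
  rw [logDeriv_powerDens ha hw, logDeriv_powerDens (ha.trans_le hab) hw]
  gcongr

end PowerLaw

/-- **Two power-law additive noises.**  For sensor `u` noise
`p_u(w) = (α_u-1)(1+w)^{-α_u}` with `α₂ > α₁ > 1`, global convex dominance
holds: for every `k ≥ 1`, prior density `π₀` with finite second moment, and
convex `φ` for which the integrals exist, `∫ φ(m₁) σ₁ ≤ ∫ φ(m₂) σ₂`; in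
particular `MSE(m₂) ≤ MSE(m₁)`. -/
theorem stmt_11 (α₁ α₂ : ℝ) (h1 : 1 < α₁) (h12 : α₁ < α₂)
    (π₀ : ℝ → ℝ) (hπm : Measurable π₀) (hπnn : ∀ x, 0 ≤ π₀ x)
    (hπ : ∫ x, π₀ x = 1) (hπ2 : Integrable (fun x => x ^ 2 * π₀ x))
    (k : ℕ) (hk : 1 ≤ k) :
    (∀ φ : ℝ → ℝ, ConvexOn ℝ Set.univ φ →
      Integrable (fun ys : Fin k → ℝ =>
        φ (cmeanA (powerDens α₁) π₀ ys) * nrmA (powerDens α₁) π₀ ys) →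
      Integrable (fun ys : Fin k → ℝ =>
        φ (cmeanA (powerDens α₂) π₀ ys) * nrmA (powerDens α₂) π₀ ys) →
      (∫ ys : Fin k → ℝ, φ (cmeanA (powerDens α₁) π₀ ys) * nrmA (powerDens α₁) π₀ ys) ≤
        ∫ ys : Fin k → ℝ, φ (cmeanA (powerDens α₂) π₀ ys) * nrmA (powerDens α₂) π₀ ys) ∧
    ((∀ ys : Fin k → ℝ, Integrable (fun x =>
        (x - cmeanA (powerDens α₁) π₀ ys) ^ 2 * (π₀ x * ∏ t, powerDens α₁ (ys t - x)))) →
      (∀ ys : Fin k → ℝ, Integrable (fun x =>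
        (x - cmeanA (powerDens α₂) π₀ ys) ^ 2 * (π₀ x * ∏ t, powerDens α₂ (ys t - x)))) →
      Integrable (fun ys : Fin k → ℝ =>
        ∫ x, (x - cmeanA (powerDens α₁) π₀ ys) ^ 2 * (π₀ x * ∏ t, powerDens α₁ (ys t - x))) →
      Integrable (fun ys : Fin k → ℝ =>
        ∫ x, (x - cmeanA (powerDens α₂) π₀ ys) ^ 2 * (π₀ x * ∏ t, powerDens α₂ (ys t - x))) →
      mseA (powerDens α₂) π₀ k ≤ mseA (powerDens α₁) π₀ k) := by
  have h2 := h1.trans h12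
  obtain ⟨hconvex, hmse⟩ := stmt_11_general (isDecayingDensity_powerDens h1)
    (isDecayingDensity_powerDens h2) (monotoneOn_logDeriv_powerDens h2)
    (bddBelow_logDeriv_powerDens h2) (fun _ => logDeriv_powerDens_le h1 h12.le) hπnn
    (.of_integral_ne_zero (hπ ▸ one_ne_zero)) hπ2 k
  exact ⟨hconvex, fun _ _ _ _ => hmse⟩
end
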